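/- For every real α > −1 and every f ∈ 𝒮 with logarithmic coefficients γ_n, the inequality ∑_{n=1}^∞ (n/(n+α)) |γ_n|² ≤ ∑_{n=1}^∞ 1/(n(n+α)) holds; the inequality is strict unless f(z) = z/(1−e^{iθ}z)² for some θ ∈ ℝ. -/

import Mathlib

/-!
Write `log (f z / z) = ∑ Cₙ zⁿ` (so `Cₙ = 2 γₙ`) and `exp (-(1/2) log (f z / z)) = ∑ βₙ zⁿ`. The theorem
follows from two inequalities for `f ∈ 𝒮` and `0 ≤ t < 1` (`bounds_S`):

* (A) `∑ n |Cₙ|² tⁿ ≤ -4 log (1 - t)`,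
* (B) `∑ (2 n - 1) |βₙ|² tⁿ ≤ 0`.

Dividing (A) by `4` gives `∑ n |γₙ|² tⁿ ≤ ∑ tⁿ / n`; multiplying by `t ^ (α - 1)` and integrating over
`(0, 1)` gives the claimed inequality (`integrate_compare`). Equality forces the two power series to agree
almost everywhere, so `|γ₁| ≥ 1`; as `β₀ = 1` and `β₁ = -γ₁`, letting `t → 1` in (B) leaves `βₙ = 0` for
`n ≥ 2`, i.e. `f z = z / (1 - γ₁ z)²` with `|γ₁| = 1` (`koebe_of_extremal`).

(A) and (B) are proved by a discrete form of the Loewner method. After a dilation, `f` becomes a univalent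
self-map `g` of the disk with `g 0 = 0`. If `g` omits a point of modulus `s²`, the square root transform
factors it as `g = q ∘ k` with `q z = z (a - v z) / (1 - a v z)`, `a = 2 s / (1 + s²)`, `|v| = 1`, and `k`
again a univalent self-map fixing `0` (`lift_rot`); then `|k' 0| = |g' 0| / a`. This can happen at most
about `log |g' 0| / log a` times; after that the image contains the circle of radius `s²`, hence the
remaining factor has derivative at least `s²` at `0` and is a single small step (`machine`).

Composing with a map `z ↦ z e^{-h z}`, where `Re h ≥ 0` and `h 0 = δ`, replaces `l = log (F z / z)` by
`l (z e^{-h}) - h`. To first order in `δ` this preserves (A) and (B): for (A) by the Schwarz–Pick disk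
for `h` (`caratheodory_disk`, `variation_phi`), for (B) by positivity of `Re h` (`variation_psi`). The
errors are `O(δ²)`, uniformly on smaller disks (`unif_step`). Since `δ` is about `-log a` and the number
of steps is `O(1 / δ)`, the total error tends to `0` as `s → 1` (`approx`).
-/

open Complex Metric Real

/-- The class `𝒮` of normalized univalent (analytic and injective) functions
on the unit disk. -/
def InClassS (f : ℂ → ℂ) : Prop :=
  AnalyticOnNhd ℂ f (ball (0 : ℂ) 1) ∧ Set.InjOn f (ball (0 : ℂ) 1) ∧
    f 0 = 0 ∧ deriv f 0 = 1

/-- `γ` are the logarithmic coefficients of `f`: there is an analytic branch `g`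
of `log (f z / z)` on the unit disk with `g 0 = 0` whose Taylor coefficients at `0`
are `2 * γ n` for `n ≥ 1`. -/
def IsLogCoeffs (f : ℂ → ℂ) (γ : ℕ → ℂ) : Prop :=
  ∃ g : ℂ → ℂ, AnalyticOnNhd ℂ g (ball (0 : ℂ) 1) ∧ g 0 = 0 ∧
    (∀ z ∈ ball (0 : ℂ) 1, z ≠ 0 → Complex.exp (g z) = f z / z) ∧
    ∀ n : ℕ, 1 ≤ n → iteratedDeriv n g 0 = (n.factorial : ℂ) * (2 * γ n)

/-- `f` coincides on the unit disk with a rotation `z / (1 - e^{iθ} z)^2`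
of the Koebe function. -/
def IsKoebeRotation (f : ℂ → ℂ) : Prop :=
  ∃ θ : ℝ, Set.EqOn f
    (fun z => z / (1 - Complex.exp (θ * Complex.I) * z) ^ 2) (ball (0 : ℂ) 1)

open ComplexConjugate
open scoped Topology

/-! ### Taylor coefficients and the Parseval formula -/

/-- Taylor coefficients at the origin. -/
noncomputable def cf (f : ℂ → ℂ) (n : ℕ) : ℂ := iteratedDeriv n f 0 / (n.factorial : ℂ)

theorem cf_hasSum {f : ℂ → ℂ} (hf : DifferentiableOn ℂ f (ball 0 1)) {z : ℂ}
    (hz : z ∈ ball (0 : ℂ) 1) : HasSum (fun n => cf f n * z ^ n) (f z) := by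
  have := Complex.hasSum_taylorSeries_on_ball hf hz
  convert! this using 2 with n
  simp [cf]; ring

/-- Uniqueness of the Taylor coefficients. -/
theorem cf_unique {f : ℂ → ℂ} {a : ℕ → ℂ}
    (h : ∀ z ∈ ball (0 : ℂ) 1, HasSum (fun n => a n * z ^ n) (f z)) : cf f = a := by
  have key : HasFPowerSeriesOnBall f (FormalMultilinearSeries.ofScalars ℂ a) 0 1 := by
    refine ⟨?_, one_pos, ?_⟩
    · refine ENNReal.le_of_forall_nnreal_lt fun r hr => ?_
      have hr1 : (r : ℝ) < 1 := by exact_mod_cast hr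
      apply FormalMultilinearSeries.le_radius_of_summable
      have := (h (r : ℝ) (by simpa using hr1)).summable.norm
      simpa [FormalMultilinearSeries.ofScalars_norm] using this
    · intro y hy
      have hy' : y ∈ ball (0 : ℂ) 1 := by
        have hy1 : ‖y‖₊ < 1 := by
          simpa [Metric.mem_eball, edist_zero_right, enorm_eq_nnnorm] using hy
        rw [mem_ball_zero_iff]; exact_mod_cast hy1
      have := h y hy'
      simpa [FormalMultilinearSeries.ofScalars_apply_eq, mul_comm] using this
  funext n
  have h2 := key.hasFPowerSeriesAt.eq_formalMultilinearSeries
    (AnalyticAt.hasFPowerSeriesAt ⟨_, key.hasFPowerSeriesAt⟩)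
  have h3 := congrArg (fun p => p.coeff n) h2
  simp [FormalMultilinearSeries.coeff_ofScalars] at h3
  simp [cf, h3]

theorem cf_congr {f g : ℂ → ℂ} (hg : DifferentiableOn ℂ g (ball 0 1))
    (h : Set.EqOn f g (ball 0 1)) : cf f = cf g :=
  cf_unique fun z hz => by rw [h hz]; exact cf_hasSum hg hz

theorem cf_zmul_deriv {f : ℂ → ℂ} (hf : DifferentiableOn ℂ f (ball 0 1)) (n : ℕ) :
    cf (fun z => z * deriv f z) n = n * cf f n := by
  revert n
  refine congrFun (cf_unique fun z hz => ?_)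
  have hd : DifferentiableOn ℂ (deriv f) (ball 0 1) := hf.deriv isOpen_ball
  have h1 := (cf_hasSum hd hz).mul_left z
  rw [hasSum_nat_add_iff' 1 |>.symm]
  simp only [Finset.range_one, Finset.sum_singleton, Nat.cast_zero, zero_mul, sub_zero]
  convert! h1 using 2 with n
  have : (n.factorial : ℂ) ≠ 0 := by exact_mod_cast n.factorial_ne_zero
  have : (n : ℂ) + 1 ≠ 0 := by exact_mod_cast n.succ_ne_zero
  simp only [cf, iteratedDeriv_succ', Nat.factorial_succ, Nat.cast_mul, Nat.cast_add, Nat.cast_one]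
  field_simp
  ring

theorem cf_zero (f : ℂ → ℂ) : cf f 0 = f 0 := by simp [cf]

/-- The mean of `f * conj g` over the circle of radius `r`. -/
noncomputable def ip (r : ℝ) (f g : ℂ → ℂ) : ℂ := circleAverage (fun z => f z * conj (g z)) 0 r

theorem circle_mono_avg (r : ℝ) (k n : ℕ) :
    circleAverage (fun z => z ^ k * conj (z ^ n)) 0 r = if k = n then ((r : ℂ) ^ 2) ^ n else 0 := by
  have e : ∀ θ : ℝ, (circleMap 0 r θ) ^ k * conj ((circleMap 0 r θ) ^ n)
      = (r : ℂ) ^ (k + n) * cexp ((((k : ℂ) - n) * I) * θ) := by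
    intro θ
    simp only [circleMap_zero, mul_pow, map_mul, map_pow, conj_ofReal, ← Complex.exp_conj,
      ← Complex.exp_nat_mul, conj_I, map_natCast]
    rw [pow_add]
    have : cexp ((((k : ℂ) - n) * I) * θ) = cexp (k * (θ * I)) * cexp (n * (θ * -I)) := by
      rw [← Complex.exp_add]; ring_nf
    rw [this]; ring
  simp only [circleAverage, e]
  rw [intervalIntegral.integral_const_mul]
  split_ifs with hkn
  · subst hkn
    have : (2 * (π : ℂ)) ≠ 0 := by exact_mod_cast (by positivity : (2 * π : ℝ) ≠ 0)
    simp
    field_simp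
    ring
  · have hne : ((k : ℂ) - n) * I ≠ 0 :=
      mul_ne_zero (sub_ne_zero.2 (by exact_mod_cast hkn)) I_ne_zero
    rw [integral_exp_mul_complex hne]
    have : cexp (((k : ℂ) - n) * I * ((2 * π : ℝ) : ℂ)) = 1 := by
      rw [Complex.exp_eq_one_iff]
      exact ⟨(k : ℤ) - n, by push_cast; ring⟩
    rw [this]; simp

/-- Term-by-term averaging of the Taylor series of `f` against `conj g`. -/
theorem avg_hasSum {f g : ℂ → ℂ} {r : ℝ} (hr0 : 0 ≤ r) (hr : r < 1)
    (hf : DifferentiableOn ℂ f (ball 0 1)) (hg : ContinuousOn g (sphere 0 r)) :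
    HasSum (fun n => cf f n * ip r (fun z => z ^ n) g) (ip r f g) := by
  have hmem : ∀ θ : ℝ, circleMap 0 r θ ∈ ball (0 : ℂ) 1 := fun θ => by
    simp [circleMap_zero, abs_of_nonneg hr0, hr]
  have hsph : ∀ θ : ℝ, circleMap 0 r θ ∈ sphere (0 : ℂ) r := circleMap_mem_sphere 0 hr0
  have hgc : Continuous fun θ : ℝ => g (circleMap 0 r θ) :=
    hg.comp_continuous (continuous_circleMap 0 r) hsph
  obtain ⟨C, hC⟩ : ∃ C, ∀ z ∈ sphere (0 : ℂ) r, ‖g z‖ ≤ C :=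
    (isCompact_sphere 0 r).exists_bound_of_continuousOn hg
  have hs : Summable fun n => ‖cf f n‖ * r ^ n * C := by
    have := (cf_hasSum hf (z := (r : ℂ)) (by simp [abs_of_nonneg hr0, hr])).summable.norm
    simp only [norm_mul, norm_pow, Complex.norm_real, Real.norm_of_nonneg hr0] at this
    exact this.mul_right C
  have h := intervalIntegral.hasSum_integral_of_dominated_convergence
    (μ := MeasureTheory.volume) (a := 0) (b := 2 * π)
    (F := fun n (θ : ℝ) => cf f n * ((circleMap 0 r θ) ^ n * conj (g (circleMap 0 r θ))))
    (f := fun θ => f (circleMap 0 r θ) * conj (g (circleMap 0 r θ)))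
    (fun n _ => ‖cf f n‖ * r ^ n * C) (fun n => by
      have : Continuous fun θ : ℝ =>
          cf f n * ((circleMap 0 r θ) ^ n * conj (g (circleMap 0 r θ))) := by
        have := continuous_circleMap 0 r
        have := Complex.continuous_conj.comp hgc
        simp only [Function.comp_def] at this
        fun_prop
      exact this.aestronglyMeasurable)
    (fun n => by
      refine Filter.Eventually.of_forall fun θ _ => ?_
      simp only [norm_mul, norm_pow, RCLike.norm_conj]
      rw [show ‖circleMap 0 r θ‖ = r by simp [circleMap_zero, abs_of_nonneg hr0], mul_assoc]
      have := hC _ (hsph θ)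
      gcongr)
    (Filter.Eventually.of_forall fun θ _ => hs)
    (by simp)
    (by
      refine Filter.Eventually.of_forall fun θ _ => ?_
      have := (cf_hasSum hf (hmem θ)).mul_right (conj (g (circleMap 0 r θ)))
      convert! this using 2
      ring)
  simp only [intervalIntegral.integral_const_mul] at h
  have := h.const_smul ((2 * π)⁻¹ : ℝ)
  convert! this using 2 with n
  simp [ip, circleAverage]; ring

theorem ip_conj (r : ℝ) (f g : ℂ → ℂ) : conj (ip r f g) = ip r g f := by
  simp only [ip, circleAverage]
  rw [Complex.real_smul, Complex.real_smul, map_mul, conj_ofReal,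
    intervalIntegral.integral_of_le (by positivity), intervalIntegral.integral_of_le (by positivity),
    ← integral_conj]
  simp [mul_comm]

theorem parseval {f g : ℂ → ℂ} {r : ℝ} (hr0 : 0 ≤ r) (hr : r < 1)
    (hf : DifferentiableOn ℂ f (ball 0 1)) (hg : DifferentiableOn ℂ g (ball 0 1)) :
    HasSum (fun n => cf f n * conj (cf g n) * ((r : ℂ) ^ 2) ^ n) (ip r f g) := by
  have hsub : sphere (0 : ℂ) r ⊆ ball 0 1 := fun z hz => by
    rw [mem_sphere_zero_iff_norm] at hz; rw [mem_ball_zero_iff, hz]; exact hr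
  have h := avg_hasSum hr0 hr hf (hg.continuousOn.mono hsub)
  convert! h using 2 with n
  have h2 := avg_hasSum (g := fun z => z ^ n) hr0 hr hg (by fun_prop)
  have h3 : ip r g (fun z => z ^ n) = cf g n * ((r : ℂ) ^ 2) ^ n := by
    refine h2.unique ?_
    have := hasSum_ite_eq n (cf g n * ((r : ℂ) ^ 2) ^ n)
    convert! this using 2 with k
    rw [ip, circle_mono_avg]
    split_ifs with hk
    · rw [hk]
    · simp
  rw [← ip_conj, h3]
  simp [mul_assoc]

/-! ### Quadratic functionals and the Schwarz–Pick disk -/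

theorem sphere_sub {r : ℝ} (hr : r < 1) : sphere (0 : ℂ) r ⊆ ball 0 1 := fun z hz => by
  rw [mem_sphere_zero_iff_norm] at hz; rw [mem_ball_zero_iff, hz]; exact hr

theorem avg_integrable {r : ℝ} (hr0 : 0 ≤ r) {f : ℂ → ℂ} (hf : ContinuousOn f (sphere 0 r)) :
    CircleIntegrable f 0 r := hf.circleIntegrable hr0

theorem ip_integrable {r : ℝ} (hr0 : 0 ≤ r) {f g : ℂ → ℂ} (hf : ContinuousOn f (sphere 0 r))
    (hg : ContinuousOn g (sphere 0 r)) :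
    CircleIntegrable (fun z => f z * conj (g z)) 0 r :=
  avg_integrable hr0 (hf.mul (Complex.continuous_conj.comp_continuousOn hg))

theorem ip_add_left {r : ℝ} (hr0 : 0 ≤ r) {f₁ f₂ g : ℂ → ℂ} (h₁ : ContinuousOn f₁ (sphere 0 r))
    (h₂ : ContinuousOn f₂ (sphere 0 r)) (hg : ContinuousOn g (sphere 0 r)) :
    ip r (fun z => f₁ z + f₂ z) g = ip r f₁ g + ip r f₂ g := by
  simp only [ip]
  rw [← circleAverage_fun_add (ip_integrable hr0 h₁ hg) (ip_integrable hr0 h₂ hg)]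
  simp only [add_mul]

theorem ip_smul_left {r : ℝ} (c : ℂ) (f g : ℂ → ℂ) :
    ip r (fun z => c * f z) g = c * ip r f g := by
  simp only [ip]
  rw [← smul_eq_mul, ← circleAverage_fun_smul]
  simp [mul_assoc]

theorem ip_add_right {r : ℝ} (hr0 : 0 ≤ r) {f g₁ g₂ : ℂ → ℂ} (hf : ContinuousOn f (sphere 0 r))
    (h₁ : ContinuousOn g₁ (sphere 0 r)) (h₂ : ContinuousOn g₂ (sphere 0 r)) :
    ip r f (fun z => g₁ z + g₂ z) = ip r f g₁ + ip r f g₂ := by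
  rw [← ip_conj, ip_add_left hr0 h₁ h₂ hf, map_add, ip_conj, ip_conj]

theorem avg_re_mono {r : ℝ} (hr0 : 0 ≤ r) {f g : ℂ → ℂ} (hf : ContinuousOn f (sphere 0 r))
    (hg : ContinuousOn g (sphere 0 r)) (h : ∀ z ∈ sphere (0 : ℂ) r, (f z).re ≤ (g z).re) :
    (circleAverage f 0 r).re ≤ (circleAverage g 0 r).re := by
  have e : ∀ {f : ℂ → ℂ}, ContinuousOn f (sphere 0 r) →
      (circleAverage f 0 r).re = circleAverage (fun z => (f z).re) 0 r := fun {f} hf =>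
    (Complex.reCLM.circleAverage_comp_comm (avg_integrable hr0 hf)).symm
  rw [e hf, e hg]
  refine circleAverage_mono ?_ ?_ ?_
  · exact (Complex.continuous_re.comp_continuousOn hf).circleIntegrable hr0
  · exact (Complex.continuous_re.comp_continuousOn hg).circleIntegrable hr0
  · rwa [abs_of_nonneg hr0]

theorem ip_norm_le {r A B : ℝ} (hr0 : 0 ≤ r) {f g : ℂ → ℂ} (hA : 0 ≤ A)
    (hf : ∀ z ∈ sphere (0 : ℂ) r, ‖f z‖ ≤ A) (hg : ∀ z ∈ sphere (0 : ℂ) r, ‖g z‖ ≤ B) :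
    ‖ip r f g‖ ≤ A * B := by
  have := intervalIntegral.norm_integral_le_of_norm_le_const (a := 0) (b := 2 * π) (C := A * B)
    (f := fun θ => f (circleMap 0 r θ) * conj (g (circleMap 0 r θ))) (fun θ _ => by
      have h1 := hf _ (circleMap_mem_sphere 0 hr0 θ)
      have h2 := hg _ (circleMap_mem_sphere 0 hr0 θ)
      rw [norm_mul, RCLike.norm_conj]
      gcongr)
  simp only [ip, circleAverage, norm_smul, norm_inv, Real.norm_eq_abs]
  rw [sub_zero] at this
  have h3 : 0 < |2 * π| := by positivity
  calc _ ≤ |2 * π|⁻¹ * (A * B * |2 * π|) := by gcongr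
    _ = A * B := by field_simp

theorem ip_const {r : ℝ} (hr0 : 0 ≤ r) (hr : r < 1) {f : ℂ → ℂ}
    (hf : DifferentiableOn ℂ f (ball 0 1)) : ip r f (fun _ => 1) = f 0 := by
  have h2 := avg_hasSum (g := fun _ => 1) hr0 hr hf (by fun_prop)
  refine h2.unique ?_
  have := hasSum_ite_eq 0 (f 0)
  convert! this using 2 with k
  have := circle_mono_avg r k 0
  simp only [pow_zero, map_one, mul_one] at this
  simp only [ip, map_one, mul_one, this]
  split_ifs with hk
  · rw [hk, cf_zero]; ring
  · simp

theorem ip_self_ge {r : ℝ} (hr0 : 0 ≤ r) (hr : r < 1) {f : ℂ → ℂ}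
    (hf : DifferentiableOn ℂ f (ball 0 1)) : ‖f 0‖ ^ 2 ≤ (ip r f f).re := by
  have h := Complex.hasSum_re (parseval hr0 hr hf hf)
  have e : ∀ n, (cf f n * conj (cf f n) * ((r : ℂ) ^ 2) ^ n).re = ‖cf f n‖ ^ 2 * (r ^ 2) ^ n := by
    intro n
    rw [Complex.mul_conj, Complex.normSq_eq_norm_sq]
    norm_cast
  simp only [e] at h
  have := le_hasSum h 0 (fun n _ => by positivity)
  simpa [cf_zero] using this

theorem ip_self_nonneg {r : ℝ} (hr0 : 0 ≤ r) (hr : r < 1) {f : ℂ → ℂ}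
    (hf : DifferentiableOn ℂ f (ball 0 1)) : 0 ≤ (ip r f f).re :=
  (sq_nonneg _).trans (ip_self_ge hr0 hr hf)

/-- The quadratic functional `∑ n |a_n|² tⁿ` of the Taylor coefficients. -/
noncomputable def Phi (t : ℝ) (f : ℂ → ℂ) : ℝ := ∑' n : ℕ, (n : ℝ) * ‖cf f n‖ ^ 2 * t ^ n

/-- The Euler operator. -/
noncomputable def eul (f : ℂ → ℂ) : ℂ → ℂ := fun z => z * deriv f z

theorem eul_diff {f : ℂ → ℂ} (hf : DifferentiableOn ℂ f (ball 0 1)) :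
    DifferentiableOn ℂ (eul f) (ball 0 1) :=
  differentiableOn_id.mul (hf.deriv isOpen_ball)

theorem Phi_hasSum {r : ℝ} (hr0 : 0 ≤ r) (hr : r < 1) {f : ℂ → ℂ}
    (hf : DifferentiableOn ℂ f (ball 0 1)) :
    HasSum (fun n : ℕ => (n : ℝ) * ‖cf f n‖ ^ 2 * (r ^ 2) ^ n) (ip r (eul f) f).re := by
  have h := Complex.hasSum_re (parseval hr0 hr (eul_diff hf) hf)
  convert! h using 2 with n
  have : cf (eul f) n = n * cf f n := cf_zmul_deriv hf n
  rw [this, mul_assoc (n : ℂ), Complex.mul_conj, Complex.normSq_eq_norm_sq]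
  norm_cast

theorem Phi_eq {r : ℝ} (hr0 : 0 ≤ r) (hr : r < 1) {f : ℂ → ℂ}
    (hf : DifferentiableOn ℂ f (ball 0 1)) : Phi (r ^ 2) f = (ip r (eul f) f).re :=
  (Phi_hasSum hr0 hr hf).tsum_eq

theorem eul_self_hasSum {r : ℝ} (hr0 : 0 ≤ r) (hr : r < 1) {f : ℂ → ℂ}
    (hf : DifferentiableOn ℂ f (ball 0 1)) :
    HasSum (fun n : ℕ => (n : ℝ) ^ 2 * ‖cf f n‖ ^ 2 * (r ^ 2) ^ n) (ip r (eul f) (eul f)).re := by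
  have h := Complex.hasSum_re (parseval hr0 hr (eul_diff hf) (eul_diff hf))
  convert! h using 2 with n
  have : cf (eul f) n = n * cf f n := cf_zmul_deriv hf n
  rw [this, Complex.mul_conj, Complex.normSq_eq_norm_sq, norm_mul, mul_pow, Complex.norm_natCast]
  norm_cast

/-- The Euler operator is symmetric for the circle means of holomorphic functions. -/
theorem ip_eul_symm {r : ℝ} (hr0 : 0 ≤ r) (hr : r < 1) {f g : ℂ → ℂ}
    (hf : DifferentiableOn ℂ f (ball 0 1)) (hg : DifferentiableOn ℂ g (ball 0 1)) :
    (ip r (eul g) f).re = (ip r (eul f) g).re := by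
  have h1 := Complex.hasSum_re (parseval hr0 hr (eul_diff hf) hg)
  have h2 := Complex.hasSum_re (parseval hr0 hr (eul_diff hg) hf)
  refine h2.unique ?_
  convert! h1 using 2 with n
  have e1 : cf (eul f) n = n * cf f n := cf_zmul_deriv hf n
  have e2 : cf (eul g) n = n * cf g n := cf_zmul_deriv hg n
  rw [e1, e2]
  have e3 : ((r : ℂ) ^ 2) ^ n = (((r ^ 2) ^ n : ℝ) : ℂ) := by push_cast; rfl
  rw [e3, Complex.re_mul_ofReal, Complex.re_mul_ofReal]
  congr 1
  simp; ring

theorem eul_add {f g : ℂ → ℂ} (hf : DifferentiableOn ℂ f (ball 0 1))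
    (hg : DifferentiableOn ℂ g (ball 0 1)) {z : ℂ} (hz : z ∈ ball (0 : ℂ) 1) :
    eul (fun z => f z + g z) z = eul f z + eul g z := by
  have h1 := (hf.differentiableAt (isOpen_ball.mem_nhds hz))
  have h2 := (hg.differentiableAt (isOpen_ball.mem_nhds hz))
  simp only [eul]
  rw [deriv_fun_add h1 h2, mul_add]

theorem ip_congr {r : ℝ} (hr0 : 0 ≤ r) {f₁ f₂ g₁ g₂ : ℂ → ℂ} (h : Set.EqOn f₁ f₂ (sphere 0 r))
    (h' : Set.EqOn g₁ g₂ (sphere 0 r)) : ip r f₁ g₁ = ip r f₂ g₂ := by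
  refine circleAverage_congr_sphere fun z hz => ?_
  rw [abs_of_nonneg hr0] at hz
  rw [h hz, h' hz]

theorem Phi_add {r : ℝ} (hr0 : 0 ≤ r) (hr : r < 1) {f g : ℂ → ℂ}
    (hf : DifferentiableOn ℂ f (ball 0 1)) (hg : DifferentiableOn ℂ g (ball 0 1)) :
    Phi (r ^ 2) (fun z => f z + g z) = Phi (r ^ 2) f + 2 * (ip r (eul f) g).re + Phi (r ^ 2) g := by
  rw [Phi_eq hr0 hr (hf.fun_add hg), Phi_eq hr0 hr hf, Phi_eq hr0 hr hg]
  have c := fun {f : ℂ → ℂ} (hf : DifferentiableOn ℂ f (ball 0 1)) =>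
    hf.continuousOn.mono (sphere_sub hr)
  rw [ip_congr hr0 (f₂ := fun z => eul f z + eul g z) (g₂ := fun z => f z + g z)
    (fun z hz => eul_add hf hg (sphere_sub hr hz)) (fun z hz => rfl)]
  rw [ip_add_left hr0 (c (eul_diff hf)) (c (eul_diff hg)) ((c hf).fun_add (c hg)),
    ip_add_right hr0 (c (eul_diff hf)) (c hf) (c hg),
    ip_add_right hr0 (c (eul_diff hg)) (c hf) (c hg)]
  simp only [add_re, ip_eul_symm hr0 hr hf hg]
  ring

/-- The Schwarz–Pick disk for functions with positive real part. -/
theorem caratheodory_disk {h : ℂ → ℂ} {δ : ℝ} (hδ : 0 ≤ δ) (hh : DifferentiableOn ℂ h (ball 0 1))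
    (hre : ∀ z ∈ ball (0 : ℂ) 1, 0 ≤ (h z).re) (h0 : h 0 = δ) {z : ℂ} (hz : z ∈ ball (0 : ℂ) 1) :
    (1 - ‖z‖ ^ 2) * (δ ^ 2 + ‖h z‖ ^ 2) ≤ 2 * δ * (h z).re * (1 + ‖z‖ ^ 2) := by
  have key : ∀ ε : ℝ, 0 < ε → (1 - ‖z‖ ^ 2) * ((δ + ε) ^ 2 + ‖h z + ε‖ ^ 2) ≤
      2 * (δ + ε) * ((h z).re + ε) * (1 + ‖z‖ ^ 2) := by
    intro ε hε
    have hne : ∀ w ∈ ball (0 : ℂ) 1, h w + ε + (δ + ε : ℝ) ≠ 0 := fun w hw hc => by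
      have := congrArg Complex.re hc
      simp at this
      linarith [hre w hw]
    have hle : ∀ w ∈ ball (0 : ℂ) 1, ‖h w + ε - (δ + ε : ℝ)‖ ≤ ‖h w + ε + (δ + ε : ℝ)‖ := by
      intro w hw
      have h1 := hre w hw
      rw [← sq_le_sq₀ (norm_nonneg _) (norm_nonneg _), ← Complex.normSq_eq_norm_sq,
        ← Complex.normSq_eq_norm_sq, Complex.normSq_apply, Complex.normSq_apply]
      simp
      nlinarith [mul_nonneg hδ h1, mul_nonneg hε.le h1, mul_nonneg hδ hε.le]
    have hS := Complex.norm_le_norm_of_mapsTo_ball (R := 1) (z := z)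
      (f := fun w => (h w + ε - (δ + ε : ℝ)) / (h w + ε + (δ + ε : ℝ)))
      (by
        refine DifferentiableOn.div (by fun_prop) (by fun_prop) hne)
      (fun w hw => by
        rw [mem_closedBall_zero_iff, norm_div]
        exact div_le_one_of_le₀ (hle w hw) (norm_nonneg _))
      (by simp [h0]) (by simpa using hz)
    rw [norm_div, div_le_iff₀ (norm_pos_iff.2 (hne z hz))] at hS
    have h2 := pow_le_pow_left₀ (norm_nonneg _) hS 2
    rw [mul_pow, ← Complex.normSq_eq_norm_sq (_ - _), ← Complex.normSq_eq_norm_sq (_ + _),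
      Complex.normSq_apply, Complex.normSq_apply] at h2
    rw [← Complex.normSq_eq_norm_sq (_ + _), Complex.normSq_apply]
    simp at h2 ⊢
    nlinarith
  have c1 : Filter.Tendsto (fun ε : ℝ => (1 - ‖z‖ ^ 2) * ((δ + ε) ^ 2 + ‖h z + ε‖ ^ 2))
      (nhdsWithin 0 (Set.Ioi 0)) (nhds ((1 - ‖z‖ ^ 2) * ((δ + 0) ^ 2 + ‖h z + (0 : ℝ)‖ ^ 2))) :=
    tendsto_nhdsWithin_of_tendsto_nhds (Continuous.tendsto (by fun_prop) 0)
  have c2 : Filter.Tendsto (fun ε : ℝ => 2 * (δ + ε) * ((h z).re + ε) * (1 + ‖z‖ ^ 2))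
      (nhdsWithin 0 (Set.Ioi 0)) (nhds (2 * (δ + 0) * ((h z).re + 0) * (1 + ‖z‖ ^ 2))) :=
    tendsto_nhdsWithin_of_tendsto_nhds (Continuous.tendsto (by fun_prop) 0)
  have := le_of_tendsto_of_tendsto c1 c2 (eventually_nhdsWithin_of_forall fun ε hε => key ε hε)
  simpa using this

/-- A function with nonnegative real part is controlled on smaller disks by its value at `0`. -/
theorem caratheodory_bound {h : ℂ → ℂ} {δ R : ℝ} (hδ : 0 ≤ δ)
    (hh : DifferentiableOn ℂ h (ball 0 1))
    (hre : ∀ z ∈ ball (0 : ℂ) 1, 0 ≤ (h z).re) (h0 : h 0 = δ) (hR : 0 ≤ R) (hR1 : R < 1) {z : ℂ}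
    (hz : z ∈ closedBall (0 : ℂ) R) : ‖h z‖ ≤ 4 / (1 - R ^ 2) * δ := by
  rw [mem_closedBall_zero_iff] at hz
  have h1 := caratheodory_disk hδ hh hre h0 (z := z) (by rw [mem_ball_zero_iff]; linarith)
  have h2 : (h z).re ≤ ‖h z‖ := Complex.re_le_norm _
  have h3 : ‖z‖ ^ 2 ≤ R ^ 2 := by gcongr
  have h4 : R ^ 2 < 1 := by nlinarith
  rw [div_mul_eq_mul_div, le_div_iff₀ (by linarith)]
  have h5 := norm_nonneg (h z)
  by_cases hp : ‖h z‖ = 0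
  · rw [hp]; linarith
  · have h6 : 0 < ‖h z‖ := lt_of_le_of_ne h5 (Ne.symm hp)
    have h7 : (1 - R ^ 2) * ‖h z‖ ^ 2 ≤ 4 * δ * ‖h z‖ := by
      calc (1 - R ^ 2) * ‖h z‖ ^ 2 ≤ (1 - ‖z‖ ^ 2) * (δ ^ 2 + ‖h z‖ ^ 2) := by
            gcongr
            · nlinarith
            · nlinarith
        _ ≤ 2 * δ * (h z).re * (1 + ‖z‖ ^ 2) := h1
        _ ≤ 2 * δ * ‖h z‖ * (1 + 1) := by
            gcongr
            nlinarith
        _ = _ := by ring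
    nlinarith

/-! ### First-order expansion and variational inequalities -/

theorem closedBall_sub {R : ℝ} (hR : R < 1) : closedBall (0 : ℂ) R ⊆ ball 0 1 :=
  closedBall_subset_ball hR

/-- The Cauchy estimate for the derivative. -/
theorem deriv_bound {f : ℂ → ℂ} {R R' M : ℝ} (hRR : R < R') (hR' : R' < 1)
    (hf : DifferentiableOn ℂ f (ball 0 1)) (hM : ∀ z ∈ closedBall (0 : ℂ) R', ‖f z‖ ≤ M)
    {z : ℂ} (hz : z ∈ closedBall (0 : ℂ) R) : ‖deriv f z‖ ≤ M / (R' - R) := by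
  have hsub : closedBall z (R' - R) ⊆ closedBall (0 : ℂ) R' := by
    apply closedBall_subset_closedBall'
    rw [mem_closedBall] at hz
    linarith
  refine Complex.norm_deriv_le_of_forall_mem_sphere_norm_le (by linarith) ?_ ?_
  · refine DifferentiableOn.diffContOnCl_ball (U := ball 0 1) hf ?_
    exact hsub.trans (closedBall_sub hR')
  · intro w hw
    exact hM w (hsub (sphere_subset_closedBall hw))

theorem taylor_two {f : ℂ → ℂ} {R C : ℝ} (hR : R < 1) (hf : DifferentiableOn ℂ f (ball 0 1))
    (hC : ∀ z ∈ closedBall (0 : ℂ) R, ‖deriv (deriv f) z‖ ≤ C) {z w : ℂ}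
    (hz : z ∈ closedBall (0 : ℂ) R) (hw : w ∈ closedBall (0 : ℂ) R) :
    ‖f w - f z - deriv f z * (w - z)‖ ≤ C * ‖w - z‖ ^ 2 := by
  have hC0 : 0 ≤ C := (norm_nonneg _).trans (hC z hz)
  have hd : DifferentiableOn ℂ (deriv f) (ball 0 1) := hf.deriv isOpen_ball
  have hat : ∀ {f : ℂ → ℂ}, DifferentiableOn ℂ f (ball 0 1) → ∀ x ∈ closedBall (0 : ℂ) R,
      DifferentiableAt ℂ f x := fun hf x hx =>
    hf.differentiableAt (isOpen_ball.mem_nhds (closedBall_sub hR hx))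
  have hseg : segment ℝ z w ⊆ closedBall (0 : ℂ) R := (convex_closedBall 0 R).segment_subset hz hw
  have h1 : ∀ x ∈ segment ℝ z w, ‖deriv f x - deriv f z‖ ≤ C * ‖w - z‖ := by
    intro x hx
    have := (convex_closedBall (0 : ℂ) R).norm_image_sub_le_of_norm_deriv_le
      (f := deriv f) (C := C) (fun y hy => hat hd y hy) hC hz (hseg hx)
    refine this.trans ?_
    gcongr
    have := norm_sub_le_of_mem_segment hx
    simpa using this
  have h2 := (convex_segment (𝕜 := ℝ) z w).norm_image_sub_le_of_norm_hasDerivWithin_le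
    (f := fun x => f x - deriv f z * x) (f' := fun x => deriv f x - deriv f z) (C := C * ‖w - z‖)
    (fun x hx => by
      have := (hat hf x (hseg hx)).hasDerivAt.fun_sub ((hasDerivAt_id x).const_mul (deriv f z))
      simpa using this.hasDerivWithinAt) h1 (left_mem_segment ℝ z w) (right_mem_segment ℝ z w)
  calc _ = ‖f w - deriv f z * w - (f z - deriv f z * z)‖ := by congr 1; ring
    _ ≤ _ := h2
    _ = _ := by ring

theorem exp_one_bound {x : ℂ} {k : ℝ} (hx : ‖x‖ ≤ k) : ‖cexp x - 1‖ ≤ ‖x‖ * Real.exp k := by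
  have := Complex.norm_exp_sub_sum_le_norm_mul_exp x 1
  simp at this
  refine this.trans ?_
  gcongr

theorem exp_two_bound {x : ℂ} {k : ℝ} (hx : ‖x‖ ≤ k) :
    ‖cexp x - 1 - x‖ ≤ ‖x‖ ^ 2 * Real.exp k := by
  have := Complex.norm_exp_sub_sum_le_norm_mul_exp x 2
  simp [Finset.sum_range_succ, sub_add_eq_sub_sub] at this
  refine this.trans ?_
  gcongr

theorem omega_mem {h : ℂ → ℂ} {R : ℝ} {z : ℂ} (hre : 0 ≤ (h z).re)
    (hz : z ∈ closedBall (0 : ℂ) R) : z * cexp (-h z) ∈ closedBall (0 : ℂ) R := by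
  rw [mem_closedBall_zero_iff] at hz ⊢
  rw [norm_mul, Complex.norm_exp]
  have : Real.exp ((-h z).re) ≤ 1 := by rw [Real.exp_le_one_iff]; simpa using hre
  nlinarith [norm_nonneg z]

theorem omega_mem_ball {h : ℂ → ℂ} {z : ℂ} (hre : 0 ≤ (h z).re)
    (hz : z ∈ ball (0 : ℂ) 1) : z * cexp (-h z) ∈ ball (0 : ℂ) 1 := by
  have := omega_mem (R := ‖z‖) hre (by simp)
  rw [mem_closedBall_zero_iff] at this
  rw [mem_ball_zero_iff] at hz ⊢
  linarith

theorem omega_dist {h : ℂ → ℂ} {k δ : ℝ} {z : ℂ} (hk : 0 ≤ k) (hδ : 0 ≤ δ) (hδ1 : δ ≤ 1)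
    (hh : ‖h z‖ ≤ k * δ) (hz : ‖z‖ ≤ 1) :
    ‖z * cexp (-h z) - z‖ ≤ k * Real.exp k * δ := by
  have h1 : ‖-h z‖ ≤ k := by rw [norm_neg]; nlinarith
  have h2 := exp_one_bound h1
  rw [norm_neg] at h2
  calc ‖z * cexp (-h z) - z‖ = ‖z‖ * ‖cexp (-h z) - 1‖ := by rw [← norm_mul]; ring_nf
    _ ≤ 1 * ((k * δ) * Real.exp k) := by gcongr; exact h2.trans (by gcongr)
    _ = _ := by ring

/-- First-order expansion of `X (z e^{-h})` with a remainder that is quadratic in `h`. -/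
theorem perturb {X h : ℂ → ℂ} {R C C' k δ : ℝ} (hR : R < 1)
    (hX : DifferentiableOn ℂ X (ball 0 1))
    (hC : ∀ z ∈ closedBall (0 : ℂ) R, ‖deriv (deriv X) z‖ ≤ C)
    (hC' : ∀ z ∈ closedBall (0 : ℂ) R, ‖deriv X z‖ ≤ C')
    (hk : 0 ≤ k) (hδ : 0 ≤ δ) (hδ1 : δ ≤ 1)
    (hh : ∀ z ∈ closedBall (0 : ℂ) R, ‖h z‖ ≤ k * δ)
    (hre : ∀ z ∈ closedBall (0 : ℂ) R, 0 ≤ (h z).re) {z : ℂ} (hz : z ∈ closedBall (0 : ℂ) R) :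
    ‖X (z * cexp (-h z)) - X z + h z * eul X z‖ ≤
      (C * (k * Real.exp k) ^ 2 + C' * (k ^ 2 * Real.exp k)) * δ ^ 2 := by
  have hC0 : 0 ≤ C := (norm_nonneg _).trans (hC z hz)
  have hC0' : 0 ≤ C' := (norm_nonneg _).trans (hC' z hz)
  have hz1 : ‖z‖ ≤ 1 := by rw [mem_closedBall_zero_iff] at hz; linarith
  have h1 := taylor_two hR hX hC hz (omega_mem (hre z hz) hz)
  have h2 := omega_dist hk hδ hδ1 (hh z hz) hz1
  have h3 : ‖z * cexp (-h z) - z + z * h z‖ ≤ k ^ 2 * Real.exp k * δ ^ 2 := by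
    have h1 : ‖-h z‖ ≤ k := by rw [norm_neg]; nlinarith [hh z hz]
    have h2 := exp_two_bound h1
    rw [norm_neg] at h2
    calc ‖z * cexp (-h z) - z + z * h z‖ = ‖z‖ * ‖cexp (-h z) - 1 - (-h z)‖ := by
          rw [← norm_mul]; ring_nf
      _ ≤ 1 * ((k * δ) ^ 2 * Real.exp k) := by
          have := hh z hz
          gcongr; exact h2.trans (by gcongr)
      _ = _ := by ring
  calc ‖X (z * cexp (-h z)) - X z + h z * eul X z‖
      = ‖(X (z * cexp (-h z)) - X z - deriv X z * (z * cexp (-h z) - z))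
        + deriv X z * (z * cexp (-h z) - z + z * h z)‖ := by simp only [eul]; ring_nf
    _ ≤ C * ‖z * cexp (-h z) - z‖ ^ 2 + C' * (k ^ 2 * Real.exp k * δ ^ 2) := by
        refine (norm_add_le _ _).trans ?_
        rw [norm_mul (deriv X z)]
        have := hC' z hz
        gcongr
    _ ≤ C * (k * Real.exp k * δ) ^ 2 + C' * (k ^ 2 * Real.exp k * δ ^ 2) := by gcongr
    _ = _ := by ring

/-- `Phi` is quadratically small: it is bounded by the square of a sup norm on a larger disk. -/
theorem Phi_small {r R E : ℝ} (hr0 : 0 ≤ r) (hrR : r < R) (hR : R < 1) {D : ℂ → ℂ}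
    (hD : DifferentiableOn ℂ D (ball 0 1)) (hE : ∀ z ∈ closedBall (0 : ℂ) R, ‖D z‖ ≤ E) :
    Phi (r ^ 2) D ≤ E / (R - r) * E := by
  have hE0 : 0 ≤ E := (norm_nonneg _).trans (hE 0 (by simp; linarith))
  have hp : 0 < R - r := by linarith
  rw [Phi_eq hr0 (hrR.trans hR) hD]
  refine (Complex.re_le_norm _).trans (ip_norm_le hr0 (by positivity) ?_ ?_)
  · intro z hz
    have h1 := deriv_bound hrR hR hD hE (sphere_subset_closedBall hz)
    rw [mem_sphere_zero_iff_norm] at hz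
    rw [eul, norm_mul, hz]
    have := norm_nonneg (deriv D z)
    nlinarith
  · intro z hz
    exact hE z (closedBall_subset_closedBall hrR.le (sphere_subset_closedBall hz))

/-- The variational inequality for `∑ n |a_n|² tⁿ`: this is where the Schwarz–Pick disk and the mean
value property combine. -/
theorem variation_phi {X h : ℂ → ℂ} {r δ : ℝ} (hr0 : 0 ≤ r) (hr : r < 1) (hδ : 0 ≤ δ)
    (hX : DifferentiableOn ℂ X (ball 0 1)) (hh : DifferentiableOn ℂ h (ball 0 1))
    (hre : ∀ z ∈ ball (0 : ℂ) 1, 0 ≤ (h z).re) (h0 : h 0 = δ) :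
    2 * (ip r (eul X) (fun z => -(h z * (1 + eul X z)))).re ≤
      -((1 - r ^ 2) / (1 + r ^ 2) * δ * (ip r (eul X) (eul X)).re) + 4 * r ^ 2 * δ / (1 + r ^ 2) := by
  set G : ℂ → ℂ := fun z => 1 + eul X z with hG
  have hN := eul_diff hX
  have hGd : DifferentiableOn ℂ G (ball 0 1) := (differentiableOn_const 1).add hN
  have hHd : DifferentiableOn ℂ (fun z => h z * G z) (ball 0 1) := hh.mul hGd
  have c := fun {f : ℂ → ℂ} (hf : DifferentiableOn ℂ f (ball 0 1)) =>
    hf.continuousOn.mono (sphere_sub hr)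
  have hN0 : eul X 0 = 0 := by simp [eul]
  have hG0 : G 0 = 1 := by simp [hG, hN0]
  -- the inner product with `eul X = G - 1`
  have e1 : (ip r (eul X) (fun z => -(h z * G z))).re = δ - (ip r G (fun z => h z * G z)).re := by
    have a1 : ip r (fun z => h z * G z) (eul X) = conj (ip r (eul X) (fun z => h z * G z)) :=
      (ip_conj _ _ _).symm
    have a2 : ip r (fun z => -(h z * G z)) (eul X) = -ip r (fun z => h z * G z) (eul X) := by
      have := ip_smul_left (r := r) (-1) (fun z => h z * G z) (eul X)
      simpa using this
    have a3 : ip r G (fun z => h z * G z) = ip r (fun _ => 1) (fun z => h z * G z)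
        + ip r (eul X) (fun z => h z * G z) :=
      ip_add_left hr0 continuousOn_const (c hN) (c hHd)
    have a4 : ip r (fun _ => 1) (fun z => h z * G z) = δ := by
      rw [← ip_conj, ip_const hr0 hr hHd, hG0, h0]; simp
    rw [← ip_conj, a2, a1, a3, a4]
    simp
  -- the mean of `|G|²`
  have e2 : (ip r G G).re = 1 + (ip r (eul X) (eul X)).re := by
    have a1 : ip r G G = ip r (fun _ => 1) G + ip r (eul X) G :=
      ip_add_left hr0 continuousOn_const (c hN) (c hGd)
    have a2 : ip r (eul X) G = ip r (eul X) (fun _ => 1) + ip r (eul X) (eul X) :=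
      ip_add_right hr0 (c hN) continuousOn_const (c hN)
    rw [a1, a2, ip_const hr0 hr hN, hN0, ← ip_conj, ip_const hr0 hr hGd, hG0]
    simp
  set κ : ℝ := (1 - r ^ 2) / (1 + r ^ 2) with hκ
  have hκ0 : 0 ≤ κ := div_nonneg (by nlinarith) (by positivity)
  -- the mean of `Re h |G|²`
  have e3 : κ * δ * ((ip r G G).re + 1) ≤ 2 * (ip r G (fun z => h z * G z)).re := by
    rcases hδ.eq_or_lt with hd | hd
    · rw [← hd]
      have : (circleAverage (fun _ : ℂ => (0 : ℂ)) 0 r).re ≤ (ip r G (fun z => h z * G z)).re := by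
        refine avg_re_mono hr0 continuousOn_const
          ((c hGd).mul (Complex.continuous_conj.comp_continuousOn (c hHd))) fun z hz => ?_
        have := hre z (sphere_sub hr hz)
        simp
        nlinarith [mul_nonneg this (sq_nonneg (G z).re), mul_nonneg this (sq_nonneg (G z).im)]
      have z0 : circleAverage (fun _ : ℂ => (0 : ℂ)) 0 r = 0 := circleAverage_const 0 0 r
      rw [z0] at this
      simp at this ⊢
      linarith
    · have hm : (ip r (fun z => (κ * δ ^ 2 : ℝ) * G z) G).re
          + (ip r (fun z => (κ : ℝ) * (h z * G z)) (fun z => h z * G z)).re ≤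
          (ip r (fun z => (2 * δ : ℝ) * G z) (fun z => h z * G z)).re := by
        have i1 := ip_integrable hr0 (f := fun z => (κ * δ ^ 2 : ℝ) * G z) (g := G)
          (continuousOn_const.mul (c hGd)) (c hGd)
        have i2 := ip_integrable hr0 (f := fun z => (κ : ℝ) * (h z * G z)) (g := fun z => h z * G z)
          (continuousOn_const.mul (c hHd)) (c hHd)
        rw [← add_re, ip, ip, ← circleAverage_fun_add i1 i2]
        refine avg_re_mono hr0 ?_ ?_ fun z hz => ?_
        · exact (((continuousOn_const.mul (c hGd)).mul
            (Complex.continuous_conj.comp_continuousOn (c hGd)))).add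
            ((continuousOn_const.mul (c hHd)).mul
            (Complex.continuous_conj.comp_continuousOn (c hHd)))
        · exact (continuousOn_const.mul (c hGd)).mul
            (Complex.continuous_conj.comp_continuousOn (c hHd))
        · have h1 := caratheodory_disk hδ hh hre h0 (sphere_sub hr hz)
          rw [mem_sphere_zero_iff_norm.1 hz] at h1
          have h2 : κ * (δ ^ 2 + ‖h z‖ ^ 2) ≤ 2 * δ * (h z).re := by
            rw [hκ, div_mul_eq_mul_div, div_le_iff₀ (by positivity)]
            exact h1
          have h3 := mul_le_mul_of_nonneg_right h2 (sq_nonneg ‖G z‖)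
          rw [← Complex.normSq_eq_norm_sq, ← Complex.normSq_eq_norm_sq, Complex.normSq_apply,
            Complex.normSq_apply] at h3
          simp only [mul_assoc, Complex.re_ofReal_mul, Complex.add_re]
          simp
          nlinarith
      rw [ip_smul_left, ip_smul_left, ip_smul_left, Complex.re_ofReal_mul, Complex.re_ofReal_mul,
        Complex.re_ofReal_mul] at hm
      have h4 := ip_self_ge hr0 hr hHd
      rw [hG0, h0] at h4
      simp at h4
      have h5 : κ * δ ^ 2 * ((ip r G G).re + 1) ≤ 2 * δ * (ip r G (fun z => h z * G z)).re := by
        nlinarith [mul_le_mul_of_nonneg_left h4 hκ0]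
      have : δ * (κ * δ * ((ip r G G).re + 1)) ≤ δ * (2 * (ip r G (fun z => h z * G z)).re) := by
        linarith
      exact le_of_mul_le_mul_left this hd
  rw [e1]
  rw [e2] at e3
  have e4 : 4 * r ^ 2 * δ / (1 + r ^ 2) = 2 * δ - 2 * (κ * δ) := by
    rw [hκ]; field_simp; ring
  rw [e4]
  nlinarith

/-- The variational inequality for the area functional. -/
theorem variation_psi {h J : ℂ → ℂ} {r : ℝ} (hr0 : 0 ≤ r) (hr : r < 1)
    (hJ : DifferentiableOn ℂ J (ball 0 1)) (hh : DifferentiableOn ℂ h (ball 0 1))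
    (hre : ∀ z ∈ ball (0 : ℂ) 1, 0 ≤ (h z).re) :
    0 ≤ (ip r J (fun z => h z * J z)).re := by
  have c := fun {f : ℂ → ℂ} (hf : DifferentiableOn ℂ f (ball 0 1)) =>
    hf.continuousOn.mono (sphere_sub hr)
  have : (circleAverage (fun _ : ℂ => (0 : ℂ)) 0 r).re ≤ (ip r J (fun z => h z * J z)).re := by
    refine avg_re_mono hr0 continuousOn_const
      ((c hJ).mul (Complex.continuous_conj.comp_continuousOn (c (hh.mul hJ)))) fun z hz => ?_
    have := hre z (sphere_sub hr hz)
    simp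
    nlinarith [mul_nonneg this (sq_nonneg (J z).re), mul_nonneg this (sq_nonneg (J z).im)]
  have z0 : circleAverage (fun _ : ℂ => (0 : ℂ)) 0 r = 0 := circleAverage_const 0 0 r
  rw [z0] at this
  simpa using this

/-! ### One composition step -/

/-- One composition step for `∑ n |a_n|² tⁿ`. -/
theorem phi_step {X h : ℂ → ℂ} {r R0 R1 C C' k δ : ℝ} (hr0 : 0 ≤ r) (hr : r ≤ R0) (hR01 : R0 < R1)
    (hR1 : R1 < 1) (hX : DifferentiableOn ℂ X (ball 0 1)) (hh : DifferentiableOn ℂ h (ball 0 1))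
    (hre : ∀ z ∈ ball (0 : ℂ) 1, 0 ≤ (h z).re) (h0 : h 0 = δ)
    (hδ : 0 ≤ δ) (hδ1 : δ ≤ 1) (hk : 0 ≤ k)
    (hC : ∀ z ∈ closedBall (0 : ℂ) R1, ‖deriv (deriv X) z‖ ≤ C)
    (hC' : ∀ z ∈ closedBall (0 : ℂ) R1, ‖deriv X z‖ ≤ C')
    (hkh : ∀ z ∈ closedBall (0 : ℂ) R1, ‖h z‖ ≤ k * δ) :
    Phi (r ^ 2) (fun z => X (z * cexp (-h z)) - h z) ≤ Phi (r ^ 2) X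
      - (1 - r ^ 2) / (1 + r ^ 2) * δ * (ip r (eul X) (eul X)).re + 4 * r ^ 2 * δ / (1 + r ^ 2)
      + (2 * (C' * (C * (k * Real.exp k) ^ 2 + C' * (k ^ 2 * Real.exp k)))
        + (C * (k * Real.exp k) ^ 2 + C' * (k ^ 2 * Real.exp k) + k * (1 + C')) ^ 2 / (R1 - R0))
        * δ ^ 2 := by
  set E1 := C * (k * Real.exp k) ^ 2 + C' * (k ^ 2 * Real.exp k) with hE1
  have hR10 : 0 ≤ R1 := by linarith
  have h00 : (0 : ℂ) ∈ closedBall (0 : ℂ) R1 := by simp [hR10]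
  have hC0 : 0 ≤ C := (norm_nonneg _).trans (hC 0 h00)
  have hC0' : 0 ≤ C' := (norm_nonneg _).trans (hC' 0 h00)
  have hE0 : 0 ≤ E1 := by positivity
  have hr1 : r < 1 := by linarith
  have hsub := closedBall_sub hR1
  have c := fun {f : ℂ → ℂ} (hf : DifferentiableOn ℂ f (ball 0 1)) =>
    hf.continuousOn.mono (sphere_sub hr1)
  set Rem : ℂ → ℂ := fun z => X (z * cexp (-h z)) - X z + h z * eul X z with hRem
  have hω : DifferentiableOn ℂ (fun z => X (z * cexp (-h z))) (ball 0 1) :=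
    hX.comp (differentiableOn_id.mul hh.neg.cexp) fun z hz => omega_mem_ball (hre z hz) hz
  have hRd : DifferentiableOn ℂ Rem (ball 0 1) := (hω.sub hX).add (hh.mul (eul_diff hX))
  have hVd : DifferentiableOn ℂ (fun z => -(h z * (1 + eul X z))) (ball 0 1) :=
    (hh.mul ((differentiableOn_const 1).add (eul_diff hX))).neg
  have hRb : ∀ z ∈ closedBall (0 : ℂ) R1, ‖Rem z‖ ≤ E1 * δ ^ 2 := fun z hz =>
    perturb hR1 hX hC hC' hk hδ hδ1 hkh (fun z hz => hre z (hsub hz)) hz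
  have heb : ∀ z ∈ closedBall (0 : ℂ) R1, ‖eul X z‖ ≤ C' := fun z hz => by
    have h1 := hC' z hz
    rw [mem_closedBall_zero_iff] at hz
    rw [eul, norm_mul]
    nlinarith [norm_nonneg z, norm_nonneg (deriv X z)]
  have hDd : DifferentiableOn ℂ (fun z => Rem z + -(h z * (1 + eul X z))) (ball 0 1) :=
    hRd.add hVd
  have hδ2 : δ ^ 2 ≤ δ := by nlinarith
  have hDb : ∀ z ∈ closedBall (0 : ℂ) R1, ‖Rem z + -(h z * (1 + eul X z))‖ ≤
      (E1 + k * (1 + C')) * δ := fun z hz => by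
    have h1 := hRb z hz
    have h2 := heb z hz
    have h3 := hkh z hz
    calc _ ≤ ‖Rem z‖ + ‖h z‖ * ‖1 + eul X z‖ := by
          refine (norm_add_le _ _).trans ?_
          rw [norm_neg, norm_mul]
      _ ≤ E1 * δ + (k * δ) * (1 + C') := by
          gcongr
          · exact h1.trans (by gcongr)
          · refine (norm_add_le _ _).trans ?_
            simpa using h2
      _ = _ := by ring
  have e : (fun z => X (z * cexp (-h z)) - h z) =
      fun z => X z + (Rem z + -(h z * (1 + eul X z))) := by
    funext z; simp only [hRem]; ring
  have s1 := Phi_small hr0 (by linarith : r < R1) hR1 hDd hDb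
  have s2 := variation_phi hr0 hr1 hδ hX hh hre h0
  have sub2 : ∀ z ∈ sphere (0 : ℂ) r, z ∈ closedBall (0 : ℂ) R1 := fun z hz =>
    closedBall_subset_closedBall (by linarith) (sphere_subset_closedBall hz)
  have s3 : (ip r (eul X) Rem).re ≤ C' * (E1 * δ ^ 2) :=
    (Complex.re_le_norm _).trans (ip_norm_le hr0 hC0' (fun z hz => heb z (sub2 z hz))
      (fun z hz => hRb z (sub2 z hz)))
  rw [e, Phi_add hr0 hr1 hX hDd, ip_add_right hr0 (c (eul_diff hX)) (c hRd) (c hVd), add_re]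
  have s4 : (E1 + k * (1 + C')) * δ / (R1 - r) * ((E1 + k * (1 + C')) * δ) ≤
      (E1 + k * (1 + C')) ^ 2 / (R1 - R0) * δ ^ 2 := by
    have : 0 < R1 - R0 := by linarith
    calc _ = (E1 + k * (1 + C')) ^ 2 / (R1 - r) * δ ^ 2 := by ring
      _ ≤ _ := by gcongr
  nlinarith

/-- The area functional `∑ (2n - 1) |a_n|² r²ⁿ`. -/
noncomputable def Psi (r : ℝ) (f : ℂ → ℂ) : ℝ := 2 * Phi (r ^ 2) f - (ip r f f).re

/-- One composition step for the area functional. -/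
theorem psi_step {X h : ℂ → ℂ} {r R0 R1 C C' M k δ : ℝ} (hr0 : 0 ≤ r) (hr : r ≤ R0) (hR01 : R0 < R1)
    (hR1 : R1 < 1) (hX : DifferentiableOn ℂ X (ball 0 1)) (hh : DifferentiableOn ℂ h (ball 0 1))
    (hre : ∀ z ∈ ball (0 : ℂ) 1, 0 ≤ (h z).re)
    (hδ : 0 ≤ δ) (hδ1 : δ ≤ 1) (hk : 0 ≤ k)
    (hM : ∀ z ∈ closedBall (0 : ℂ) R1, ‖X z‖ ≤ M)
    (hC : ∀ z ∈ closedBall (0 : ℂ) R1, ‖deriv (deriv X) z‖ ≤ C)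
    (hC' : ∀ z ∈ closedBall (0 : ℂ) R1, ‖deriv X z‖ ≤ C')
    (hkh : ∀ z ∈ closedBall (0 : ℂ) R1, ‖h z‖ ≤ k * δ) :
    ∀ E2, E2 = (C * (k * Real.exp k) ^ 2 + C' * (k ^ 2 * Real.exp k)) * Real.exp k
        + (M + k * C') * (k ^ 2 * Real.exp k) + k ^ 2 * C' →
    Psi r (fun z => X (z * cexp (-h z)) * cexp (h z / 2)) ≤ Psi r X
      + (4 * ((M + C') * E2) + 2 * ((k * (M + C') + E2) ^ 2 / (R1 - R0))) * δ ^ 2 := by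
  intro E2 hE2
  set E1 := C * (k * Real.exp k) ^ 2 + C' * (k ^ 2 * Real.exp k) with hE1
  have hR10 : 0 ≤ R1 := by linarith
  have h00 : (0 : ℂ) ∈ closedBall (0 : ℂ) R1 := by simp [hR10]
  have hC0 : 0 ≤ C := (norm_nonneg _).trans (hC 0 h00)
  have hC0' : 0 ≤ C' := (norm_nonneg _).trans (hC' 0 h00)
  have hM0 : 0 ≤ M := (norm_nonneg _).trans (hM 0 h00)
  have hE0 : 0 ≤ E1 := by positivity
  have hE20 : 0 ≤ E2 := by rw [hE2]; positivity
  have hr1 : r < 1 := by linarith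
  have hsub := closedBall_sub hR1
  have c := fun {f : ℂ → ℂ} (hf : DifferentiableOn ℂ f (ball 0 1)) =>
    hf.continuousOn.mono (sphere_sub hr1)
  have hω : DifferentiableOn ℂ (fun z => X (z * cexp (-h z))) (ball 0 1) :=
    hX.comp (differentiableOn_id.mul hh.neg.cexp) fun z hz => omega_mem_ball (hre z hz) hz
  set J : ℂ → ℂ := fun z => (1 / 2 : ℂ) * X z + (-1 : ℂ) * eul X z with hJ
  have hJd : DifferentiableOn ℂ J (ball 0 1) :=
    (hX.const_mul _).add ((eul_diff hX).const_mul _)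
  have hhJ : DifferentiableOn ℂ (fun z => h z * J z) (ball 0 1) := hh.mul hJd
  set Rem : ℂ → ℂ := fun z => X (z * cexp (-h z)) * cexp (h z / 2) - X z - h z * J z with hRem
  have hRd : DifferentiableOn ℂ Rem (ball 0 1) :=
    ((hω.mul (hh.div_const 2).cexp).sub hX).sub hhJ
  have heb : ∀ z ∈ closedBall (0 : ℂ) R1, ‖eul X z‖ ≤ C' := fun z hz => by
    have h1 := hC' z hz
    rw [mem_closedBall_zero_iff] at hz
    rw [eul, norm_mul]
    nlinarith [norm_nonneg z, norm_nonneg (deriv X z)]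
  have hJb : ∀ z ∈ closedBall (0 : ℂ) R1, ‖J z‖ ≤ M + C' := fun z hz => by
    refine (norm_add_le _ _).trans ?_
    rw [norm_mul, norm_mul]
    norm_num
    linarith [hM z hz, heb z hz, norm_nonneg (X z)]
  have hδ2 : δ ^ 2 ≤ δ := by nlinarith
  have hRb : ∀ z ∈ closedBall (0 : ℂ) R1, ‖Rem z‖ ≤ E2 * δ ^ 2 := fun z hz => by
    have h1 := perturb hR1 hX hC hC' hk hδ hδ1 hkh (fun z hz => hre z (hsub hz)) hz
    have hh1 := hkh z hz
    have hhk : ‖h z‖ ≤ k := hh1.trans (by nlinarith)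
    have h2k : ‖h z / 2‖ ≤ k := by rw [norm_div]; norm_num; linarith [norm_nonneg (h z)]
    have h2k' : ‖h z / 2‖ ≤ k * δ := by rw [norm_div]; norm_num; linarith [norm_nonneg (h z)]
    have h3 := exp_two_bound h2k
    have h4 : ‖cexp (h z / 2)‖ ≤ Real.exp k := by
      refine (Complex.norm_exp_le_exp_norm _).trans ?_
      gcongr
    have e : Rem z = (X (z * cexp (-h z)) - X z + h z * eul X z) * cexp (h z / 2)
        + (X z - h z * eul X z) * (cexp (h z / 2) - 1 - h z / 2)
        - h z ^ 2 / 2 * eul X z := by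
      simp only [hRem, hJ]; ring
    have h5 : ‖X z - h z * eul X z‖ ≤ M + k * C' := by
      refine (norm_sub_le _ _).trans ?_
      rw [norm_mul]
      have := heb z hz
      have := hM z hz
      gcongr
    have h6 : ‖h z ^ 2 / 2 * eul X z‖ ≤ (k * δ) ^ 2 * C' := by
      rw [norm_mul, norm_div, norm_pow]
      have h7 := heb z hz
      gcongr
      have : ‖h z‖ ^ 2 ≤ (k * δ) ^ 2 := by gcongr
      norm_num
      linarith [sq_nonneg ‖h z‖]
    calc ‖Rem z‖ ≤ ‖X (z * cexp (-h z)) - X z + h z * eul X z‖ * ‖cexp (h z / 2)‖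
          + ‖X z - h z * eul X z‖ * ‖cexp (h z / 2) - 1 - h z / 2‖
          + ‖h z ^ 2 / 2 * eul X z‖ := by
            rw [e]
            refine (norm_sub_le _ _).trans ?_
            gcongr
            refine (norm_add_le _ _).trans ?_
            rw [norm_mul, norm_mul]
      _ ≤ (E1 * δ ^ 2) * Real.exp k + (M + k * C') * ((k * δ) ^ 2 * Real.exp k)
          + (k * δ) ^ 2 * C' := by
            gcongr
            exact h3.trans (by gcongr)
      _ = _ := by rw [hE2]; ring
  have hDd : DifferentiableOn ℂ (fun z => h z * J z + Rem z) (ball 0 1) := hhJ.add hRd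
  have hDb : ∀ z ∈ closedBall (0 : ℂ) R1, ‖h z * J z + Rem z‖ ≤
      (k * (M + C') + E2) * δ := fun z hz => by
    have h1 := hRb z hz
    have h2 := hJb z hz
    have h3 := hkh z hz
    calc _ ≤ ‖h z‖ * ‖J z‖ + ‖Rem z‖ := by
          refine (norm_add_le _ _).trans ?_
          rw [norm_mul]
      _ ≤ (k * δ) * (M + C') + E2 * δ := by
          gcongr
          exact h1.trans (by gcongr)
      _ = _ := by ring
  have e : (fun z => X (z * cexp (-h z)) * cexp (h z / 2)) =
      fun z => X z + (h z * J z + Rem z) := by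
    funext z; simp only [hRem]; ring
  have s1 := Phi_small hr0 (by linarith : r < R1) hR1 hDd hDb
  have s2 := variation_psi hr0 hr1 hJd hh hre
  have sub2 : ∀ z ∈ sphere (0 : ℂ) r, z ∈ closedBall (0 : ℂ) R1 := fun z hz =>
    closedBall_subset_closedBall (by linarith) (sphere_subset_closedBall hz)
  have s3 : -(ip r J Rem).re ≤ (M + C') * (E2 * δ ^ 2) := by
    have := (abs_le.1 (Complex.abs_re_le_norm (ip r J Rem))).1
    have h2 := ip_norm_le hr0 (by positivity) (fun z hz => hJb z (sub2 z hz))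
      (fun z hz => hRb z (sub2 z hz))
    linarith
  have s4 : (k * (M + C') + E2) * δ / (R1 - r) * ((k * (M + C') + E2) * δ) ≤
      (k * (M + C') + E2) ^ 2 / (R1 - R0) * δ ^ 2 := by
    have : 0 < R1 - R0 := by linarith
    calc _ = (k * (M + C') + E2) ^ 2 / (R1 - r) * δ ^ 2 := by ring
      _ ≤ _ := by gcongr
  have s5 := ip_self_nonneg hr0 hr1 hDd
  set D : ℂ → ℂ := fun z => h z * J z + Rem z with hD
  -- polarization of the area functional
  have p1 : (ip r J D).re = (1 / 2) * (ip r X D).re - (ip r (eul X) D).re := by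
    have : ip r J D = ip r (fun z => (1 / 2 : ℂ) * X z) D + ip r (fun z => (-1 : ℂ) * eul X z) D :=
      ip_add_left hr0 (c (hX.const_mul _)) (c ((eul_diff hX).const_mul _)) (c hDd)
    rw [this, ip_smul_left, ip_smul_left]
    simp; ring
  have p2 : ip r J D = ip r J (fun z => h z * J z) + ip r J Rem :=
    ip_add_right hr0 (c hJd) (c hhJ) (c hRd)
  have p3 : (ip r (fun z => X z + D z) (fun z => X z + D z)).re =
      (ip r X X).re + 2 * (ip r X D).re + (ip r D D).re := by
    rw [ip_add_left hr0 (c hX) (c hDd) ((c hX).fun_add (c hDd)),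
      ip_add_right hr0 (c hX) (c hX) (c hDd), ip_add_right hr0 (c hDd) (c hX) (c hDd),
      ← ip_conj r X D]
    simp; ring
  have p2' := congrArg Complex.re p2
  rw [add_re] at p2'
  rw [e, Psi, Psi, Phi_add hr0 hr1 hX hDd, p3]
  nlinarith

/-! ### Uniform error bounds for a composition step -/

theorem Psi_hasSum {r : ℝ} (hr0 : 0 ≤ r) (hr : r < 1) {f : ℂ → ℂ}
    (hf : DifferentiableOn ℂ f (ball 0 1)) :
    HasSum (fun n : ℕ => (2 * (n : ℝ) - 1) * ‖cf f n‖ ^ 2 * (r ^ 2) ^ n) (Psi r f) := by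
  have h := Complex.hasSum_re (parseval hr0 hr hf hf)
  have e : ∀ n, (cf f n * conj (cf f n) * ((r : ℂ) ^ 2) ^ n).re = ‖cf f n‖ ^ 2 * (r ^ 2) ^ n := by
    intro n
    rw [Complex.mul_conj, Complex.normSq_eq_norm_sq]
    norm_cast
  simp only [e] at h
  have h2 := ((Phi_hasSum hr0 hr hf).mul_left 2).sub h
  rw [Psi, Phi_eq hr0 hr hf]
  convert! h2 using 2 with n
  ring

/-- The two estimates carried through the composition steps, with an error `e`: the weighted sum of
the Taylor coefficients of `l` and the area inequality for `exp (-l / 2)`. -/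
def Good (R0 : ℝ) (l : ℂ → ℂ) (e : ℝ) : Prop :=
  ∀ r : ℝ, 0 ≤ r → r ≤ R0 → Phi (r ^ 2) l ≤ -4 * Real.log (1 - r ^ 2) + e ∧
    Psi r (fun z => cexp (-l z / 2)) ≤ e

theorem rot_mem {u z : ℂ} (hu : ‖u‖ = 1) (hz : z ∈ ball (0 : ℂ) 1) : u * z ∈ ball (0 : ℂ) 1 := by
  rw [mem_ball_zero_iff] at *
  rwa [norm_mul, hu, one_mul]

theorem cf_rot {f : ℂ → ℂ} (hf : DifferentiableOn ℂ f (ball 0 1)) {u : ℂ} (hu : ‖u‖ = 1) (c d : ℂ) :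
    cf (fun z => c * f (u * z) + d) = fun n => c * (cf f n * u ^ n) + if n = 0 then d else 0 := by
  refine cf_unique fun z hz => ?_
  have h1 := (cf_hasSum hf (rot_mem hu hz)).mul_left c
  have h2 := hasSum_ite_eq 0 d
  have h3 := h1.add h2
  convert! h3 using 2 with n
  rw [mul_pow]
  split_ifs with hn
  · subst hn; simp
  · ring

/-- `Good` is invariant under `l ↦ l (u ·)` with `|u| = 1` and under adding an imaginary constant. -/
theorem Good.rot {R0 e : ℝ} {l : ℂ → ℂ} (hR0 : R0 < 1) (hl : DifferentiableOn ℂ l (ball 0 1))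
    (h : Good R0 l e) {u : ℂ} (hu : ‖u‖ = 1) (y : ℝ) :
    Good R0 (fun z => l (u * z) + y * I) e := by
  intro r hr0 hr
  obtain ⟨h1, h2⟩ := h r hr0 hr
  have hr1 : r < 1 := by linarith
  have hld : DifferentiableOn ℂ (fun z => l (u * z)) (ball 0 1) :=
    hl.comp (by fun_prop) fun z hz => rot_mem hu hz
  have hB : DifferentiableOn ℂ (fun z => cexp (-l z / 2)) (ball 0 1) := (hl.neg.div_const 2).cexp
  have hB' : DifferentiableOn ℂ (fun z => cexp (-(l (u * z) + y * I) / 2)) (ball 0 1) :=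
    ((hld.add_const _).neg.div_const 2).cexp
  constructor
  · have : Phi (r ^ 2) (fun z => l (u * z) + y * I) = Phi (r ^ 2) l := by
      unfold Phi
      refine tsum_congr fun n => ?_
      have := congrFun (cf_rot hl hu 1 (y * I)) n
      simp only [one_mul] at this
      rw [this]
      split_ifs with hn
      · subst hn; simp
      · simp [hu]
    rwa [this]
  · refine le_trans (le_of_eq ?_) h2
    refine (Psi_hasSum hr0 hr1 hB').unique ?_
    convert! Psi_hasSum hr0 hr1 hB using 2 with n
    have h3 : (fun z => cexp (-(l (u * z) + y * I) / 2)) =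
        fun z => cexp (-(y * I) / 2) * (fun z => cexp (-l z / 2)) (u * z) + 0 := by
      funext z
      rw [add_zero, ← Complex.exp_add]; ring_nf
    rw [h3, cf_rot hB hu]
    have h4 : ‖cexp (-(y * I) / 2)‖ = 1 := by
      rw [Complex.norm_exp]; simp
    simp only [ite_self, add_zero, norm_mul, norm_pow, hu, one_pow, mul_one, h4, one_mul]

/-- Up to an error `4 δ²`, the bound `-4 log (1 - t)` absorbs one step: it is a supersolution of the
comparison equation that arises from `phi_step`. -/
theorem log_step {t δ : ℝ} (ht : 0 ≤ t) (ht1 : t < 1) (hδ : 0 ≤ δ) :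
    -4 * Real.log (1 - t * (1 - (1 - t) / (1 + t) * δ)) + 4 * t * δ / (1 + t) ≤
      -4 * Real.log (1 - t) + 4 * δ ^ 2 := by
  set x := t * δ / (1 + t) with hx
  have hx0 : 0 ≤ x := by positivity
  have hxδ : x ≤ δ := by
    rw [hx, div_le_iff₀ (by positivity)]
    nlinarith
  have e1 : 1 - t * (1 - (1 - t) / (1 + t) * δ) = (1 - t) * (1 + x) := by
    rw [hx]; field_simp; ring
  have e2 : 4 * t * δ / (1 + t) = 4 * x := by rw [hx]; ring
  rw [e1, e2, Real.log_mul (by linarith) (by linarith)]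
  have h1 := Real.one_sub_inv_le_log_of_pos (by linarith : 0 < 1 + x)
  have h2 : x - x ^ 2 ≤ 1 - (1 + x)⁻¹ := by
    have : (1 + x)⁻¹ * (1 + x) = 1 := inv_mul_cancel₀ (by linarith)
    have h3 : 0 < (1 + x)⁻¹ := by positivity
    have h4 : (1 + x)⁻¹ ≤ 1 - x + x ^ 2 := by
      rw [inv_le_iff_one_le_mul₀ (by linarith)]
      nlinarith [pow_nonneg hx0 3]
    linarith
  nlinarith

/-- By the Bernoulli inequality `1 - q n ≤ (1 - q)ⁿ`, the loss term of `phi_step` amounts to evaluating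
`Phi` at a smaller radius. -/
theorem Phi_bernoulli {X : ℂ → ℂ} {r q : ℝ} (hr0 : 0 ≤ r) (hr : r < 1)
    (hX : DifferentiableOn ℂ X (ball 0 1)) (hq0 : 0 ≤ q) (hq1 : q ≤ 1) :
    Phi (r ^ 2) X - q * (ip r (eul X) (eul X)).re ≤ Phi ((r * √(1 - q)) ^ 2) X := by
  have hs1 : √(1 - q) ≤ 1 := Real.sqrt_le_one.2 (by linarith)
  have hs0 := Real.sqrt_nonneg (1 - q)
  have hr' : r * √(1 - q) < 1 := by nlinarith
  have h1 := Phi_hasSum hr0 hr hX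
  have h2 := (eul_self_hasSum hr0 hr hX).mul_left q
  have h3 := Phi_hasSum (mul_nonneg hr0 hs0) hr' hX
  rw [Phi_eq hr0 hr hX, Phi_eq (mul_nonneg hr0 hs0) hr' hX]
  refine hasSum_le (fun n => ?_) (h1.sub h2) h3
  have h4 := one_add_mul_le_pow (a := -q) (by linarith) n
  rw [mul_pow, Real.sq_sqrt (by linarith), mul_pow]
  have h5 : 0 ≤ (n : ℝ) * ‖cf X n‖ ^ 2 * (r ^ 2) ^ n := by positivity
  calc _ = (n : ℝ) * ‖cf X n‖ ^ 2 * (r ^ 2) ^ n * (1 + n * -q) := by ring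
    _ ≤ (n : ℝ) * ‖cf X n‖ ^ 2 * (r ^ 2) ^ n * (1 + -q) ^ n := by gcongr
    _ = _ := by rw [← sub_eq_add_neg]; ring

/-- The composition step `l ↦ l (z e^{-h}) - h` costs an error quadratic in `h 0`, with a constant
depending only on `R0` and a bound for `-Re (l 0)`. -/
theorem unif_step {R0 Λ : ℝ} (hR00 : 0 ≤ R0) (hR0 : R0 < 1) (hΛ : 0 ≤ Λ) :
    ∃ K : ℝ, 0 ≤ K ∧ ∀ (l h : ℂ → ℂ) (δ e : ℝ), DifferentiableOn ℂ l (ball 0 1) →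
      (∀ z ∈ ball (0 : ℂ) 1, (l z).re ≤ 0) → -Λ ≤ (l 0).re → DifferentiableOn ℂ h (ball 0 1) →
      (∀ z ∈ ball (0 : ℂ) 1, 0 ≤ (h z).re) → h 0 = δ → δ ≤ 1 → Good R0 l e →
      Good R0 (fun z => l (z * cexp (-h z)) - h z) (e + K * δ ^ 2) := by
  obtain ⟨R1, hR01, hR1⟩ := exists_between hR0
  obtain ⟨R2, hR12, hR2⟩ := exists_between hR1
  obtain ⟨R3, hR23, hR3⟩ := exists_between hR2
  have hR3p : 0 < R3 := by linarith
  have d32 : 0 < R3 - R2 := by linarith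
  have d21 : 0 < R2 - R1 := by linarith
  have d10 : 0 < R1 - R0 := by linarith
  have d3 : 0 < 1 - R3 := by linarith
  obtain ⟨M0, hM0⟩ : ∃ x : ℝ, x = 2 * (Λ + 1) * R3 / (1 - R3) := ⟨_, rfl⟩
  have hM00 : 0 ≤ M0 := by rw [hM0]; positivity
  obtain ⟨M, hM⟩ : ∃ x : ℝ, x = Real.exp ((M0 + Λ) / 2) := ⟨_, rfl⟩
  obtain ⟨k, hk⟩ : ∃ x : ℝ, x = 4 / (1 - R1 ^ 2) := ⟨_, rfl⟩
  have hk0 : 0 ≤ k := hk ▸ div_nonneg (by norm_num) (by nlinarith)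
  -- bounds valid for any function bounded by `m` on the disk of radius `R3`
  have gen : ∀ (X : ℂ → ℂ) (m : ℝ), DifferentiableOn ℂ X (ball 0 1) →
      (∀ z ∈ closedBall (0 : ℂ) R3, ‖X z‖ ≤ m) →
      (∀ z ∈ closedBall (0 : ℂ) R1, ‖deriv X z‖ ≤ m / (R3 - R2)) ∧
      (∀ z ∈ closedBall (0 : ℂ) R1, ‖deriv (deriv X) z‖ ≤ m / (R3 - R2) / (R2 - R1)) := by
    intro X m hX hm
    have h2 : ∀ z ∈ closedBall (0 : ℂ) R2, ‖deriv X z‖ ≤ m / (R3 - R2) := fun z hz =>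
      deriv_bound hR23 hR3 hX hm hz
    exact ⟨fun z hz => h2 z (closedBall_subset_closedBall hR12.le hz), fun z hz =>
      deriv_bound hR12 hR2 (hX.deriv isOpen_ball) h2 hz⟩
  obtain ⟨C1', hC1'⟩ : ∃ x : ℝ, x = M0 / (R3 - R2) := ⟨_, rfl⟩
  obtain ⟨C1, hC1⟩ : ∃ x : ℝ, x = C1' / (R2 - R1) := ⟨_, rfl⟩
  obtain ⟨C2', hC2'⟩ : ∃ x : ℝ, x = M / (R3 - R2) := ⟨_, rfl⟩
  obtain ⟨C2, hC2⟩ : ∃ x : ℝ, x = C2' / (R2 - R1) := ⟨_, rfl⟩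
  obtain ⟨K1, hK1⟩ : ∃ x : ℝ, x = (2 * (C1' * (C1 * (k * Real.exp k) ^ 2 + C1' * (k ^ 2 * Real.exp k)))
        + (C1 * (k * Real.exp k) ^ 2 + C1' * (k ^ 2 * Real.exp k) + k * (1 + C1')) ^ 2 / (R1 - R0)) := ⟨_, rfl⟩
  obtain ⟨E2, hE2⟩ : ∃ E2, E2 = (C2 * (k * Real.exp k) ^ 2 + C2' * (k ^ 2 * Real.exp k))
    * Real.exp k + (M + k * C2') * (k ^ 2 * Real.exp k) + k ^ 2 * C2' := ⟨_, rfl⟩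
  obtain ⟨K2, hK2⟩ : ∃ x : ℝ, x = (4 * ((M + C2') * E2) + 2 * ((k * (M + C2') + E2) ^ 2 / (R1 - R0))) := ⟨_, rfl⟩
  have hMp : 0 < M := hM ▸ Real.exp_pos _
  have hC1'0 : 0 ≤ C1' := by rw [hC1']; positivity
  have hC10 : 0 ≤ C1 := by rw [hC1]; positivity
  have hC2'0 : 0 ≤ C2' := by rw [hC2']; positivity
  have hC20 : 0 ≤ C2 := by rw [hC2]; positivity
  have hE20 : 0 ≤ E2 := by rw [hE2]; positivity
  have hK10 : 0 ≤ K1 := by rw [hK1]; positivity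
  have hK20 : 0 ≤ K2 := by rw [hK2]; positivity
  refine ⟨K1 + 4 + K2, by positivity, ?_⟩
  intro l h δ e hl hlre hl0 hh hre h0 hδ1 hgood r hr0 hr
  have hδ : 0 ≤ δ := by
    have := hre 0 (by simp)
    rw [h0] at this
    simpa using this
  have hr1 : r < 1 := by linarith
  have hlb : ∀ z ∈ closedBall (0 : ℂ) R3, ‖l z - l 0‖ ≤ M0 := by
    intro z hz
    have hz1 := closedBall_sub hR3 hz
    rw [mem_closedBall_zero_iff] at hz
    have := Complex.borelCaratheodory_zero (f := fun z => l z - l 0) (M := Λ + 1) (R := 1) (z := z)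
      (by linarith) (hl.sub_const _) (fun w hw => by
        have := hlre w hw
        simp; linarith) one_pos hz1 (by simp)
    refine this.trans ?_
    rw [hM0]
    gcongr
  obtain ⟨b1, b2⟩ := gen (fun z => l z - l 0) M0 (hl.sub_const _) hlb
  have ed : deriv (fun z => l z - l 0) = deriv l := by funext z; simp
  rw [ed, ← hC1'] at b1 b2
  rw [← hC1] at b2
  have hBd : DifferentiableOn ℂ (fun z => cexp (-l z / 2)) (ball 0 1) := (hl.neg.div_const 2).cexp
  have hBb : ∀ z ∈ closedBall (0 : ℂ) R3, ‖cexp (-l z / 2)‖ ≤ M := by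
    intro z hz
    rw [Complex.norm_exp, hM]
    gcongr
    have h1 := hlb z hz
    have h2 := (abs_le.1 ((Complex.abs_re_le_norm _).trans h1)).1
    have e : (-l z / 2).re = (-(l z).re) / 2 := by simp
    rw [e]
    rw [sub_re] at h2
    linarith
  obtain ⟨b3, b4⟩ := gen _ M hBd hBb
  rw [← hC2'] at b3 b4
  rw [← hC2] at b4
  have hkh : ∀ z ∈ closedBall (0 : ℂ) R1, ‖h z‖ ≤ k * δ := fun z hz =>
    hk ▸ caratheodory_bound hδ hh hre h0 (by linarith) hR1 hz
  have hδ2 := sq_nonneg δ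
  constructor
  · have s1 := phi_step hr0 hr hR01 hR1 hl hh hre h0 hδ hδ1 hk0 b2 b1 hkh
    rw [← hK1] at s1
    obtain ⟨κ, hκ⟩ : ∃ x : ℝ, x = (1 - r ^ 2) / (1 + r ^ 2) := ⟨_, rfl⟩
    rw [← hκ] at s1
    clear hK1 hK2 hE2 hC1 hC1' hC2 hC2' hM hM0 hk
    have hκ0 : 0 ≤ κ := hκ ▸ div_nonneg (by nlinarith only [hr0, hr1]) (by positivity)
    have hκ1 : κ ≤ 1 := by rw [hκ, div_le_one (by positivity)]; nlinarith only [hr0]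
    have hq0 : 0 ≤ κ * δ := by positivity
    have hq1 : κ * δ ≤ 1 := by nlinarith only [hκ0, hκ1, hδ, hδ1]
    have s2 := Phi_bernoulli hr0 hr1 hl hq0 hq1
    have hs1 : √(1 - κ * δ) ≤ 1 := Real.sqrt_le_one.2 (by linarith only [hq0])
    have hs0 := Real.sqrt_nonneg (1 - κ * δ)
    have s3 := (hgood (r * √(1 - κ * δ)) (by positivity) (by nlinarith only [hr0, hr, hs0, hs1])).1
    have s4 := log_step (t := r ^ 2) (δ := δ) (by positivity) (by nlinarith only [hr0, hr1]) hδ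
    rw [← hκ] at s4
    rw [show (r * √(1 - κ * δ)) ^ 2 = r ^ 2 * (1 - κ * δ) by
      rw [mul_pow, Real.sq_sqrt (by linarith only [hq1])]] at s2 s3
    have : 0 ≤ K2 * δ ^ 2 := by positivity
    linarith only [s1, s2, s3, s4, this]
  · have s1 := psi_step hr0 hr hR01 hR1 hBd hh hre hδ hδ1 hk0
      (fun z hz => hBb z (closedBall_subset_closedBall (by linarith) hz)) b4 b3 hkh E2 hE2
    rw [← hK2] at s1
    have s2 := (hgood r hr0 hr).2
    have e1 : (fun z => cexp (-(l (z * cexp (-h z)) - h z) / 2)) =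
        fun z => (fun z => cexp (-l z / 2)) (z * cexp (-h z)) * cexp (h z / 2) := by
      funext z
      simp only
      rw [← Complex.exp_add]; ring_nf
    rw [e1]
    have : 0 ≤ (K1 + 4) * δ ^ 2 := by positivity
    linarith only [s1, s2, this]

/-! ### Exponential representations -/

/-- A nonvanishing holomorphic function on the unit disk has a holomorphic logarithm. -/
theorem exists_log {w : ℂ → ℂ} (hw : DifferentiableOn ℂ w (ball 0 1))
    (h0 : ∀ z ∈ ball (0 : ℂ) 1, w z ≠ 0) {c : ℂ} (hc : cexp c = w 0) :
    ∃ L : ℂ → ℂ, DifferentiableOn ℂ L (ball 0 1) ∧ L 0 = c ∧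
      ∀ z ∈ ball (0 : ℂ) 1, cexp (L z) = w z := by
  obtain ⟨L, hL0, hL⟩ := ((hw.deriv isOpen_ball).div hw h0).isExactOn_ball.with_val_at 0 c
  have hLd : DifferentiableOn ℂ L (ball 0 1) := fun z hz =>
    (hL z hz).differentiableAt.differentiableWithinAt
  refine ⟨L, hLd, hL0, fun z hz => ?_⟩
  have hd : ∀ z ∈ ball (0 : ℂ) 1, HasDerivAt (fun z => w z * cexp (-L z)) 0 z := by
    intro z hz
    have h1 := (hw.differentiableAt (isOpen_ball.mem_nhds hz)).hasDerivAt
    have h2 := h1.fun_mul (hL z hz).fun_neg.cexp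
    convert! h2 using 1
    have := h0 z hz
    simp only [Pi.div_apply]
    field_simp
    ring
  have hconst := IsOpen.is_const_of_deriv_eq_zero (𝕜 := ℂ) isOpen_ball
    (convex_ball (0 : ℂ) 1).isPreconnected
    (fun z hz => (hd z hz).differentiableAt.differentiableWithinAt)
    (fun z hz => (hd z hz).deriv) hz (mem_ball_self one_pos)
  simp only [hL0, ← hc, ← Complex.exp_add, add_neg_cancel, Complex.exp_zero] at hconst
  rw [Complex.exp_neg, ← div_eq_mul_inv, div_eq_one_iff_eq (Complex.exp_ne_zero _)] at hconst
  exact hconst.symm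

/-- `F (a z) = a z exp (l z)` on the unit disk with `Re l ≤ 0`, `Re (l 0) = -lam`, and `l` satisfying
the estimates of `Good` with error `e`. The scale `a` leaves room for factors of `F` such as `qm a v`,
whose only zeros in the disk are `0` and a point of modulus `a`. -/
def ExpRep (R0 a : ℝ) (F : ℂ → ℂ) (lam e : ℝ) : Prop :=
  ∃ l : ℂ → ℂ, DifferentiableOn ℂ l (ball 0 1) ∧ (∀ z ∈ ball (0 : ℂ) 1, (l z).re ≤ 0) ∧
    (l 0).re = -lam ∧ (∀ z ∈ ball (0 : ℂ) 1, F (a * z) = a * z * cexp (l z)) ∧ Good R0 l e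

/-- An exponential representation of `F` yields one of `F ∘ ω`, writing `ω z = z e^{-h z}` up to rotation.
Both the decrease of `Re (l 0)` and the error are governed by `-log |ω' 0|`. -/
theorem step_rep {R0 Λ : ℝ} (hR00 : 0 ≤ R0) (hR0 : R0 < 1) (hΛ : 0 ≤ Λ) :
    ∃ K : ℝ, 0 ≤ K ∧ ∀ (a : ℝ) (F ω : ℂ → ℂ) (lam e : ℝ), 0 < a → a ≤ 1 → ExpRep R0 a F lam e →
      lam ≤ Λ → DifferentiableOn ℂ ω (ball 0 1) → Set.MapsTo ω (ball 0 1) (ball 0 1) → ω 0 = 0 →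
      (∀ z ∈ ball (0 : ℂ) a, z ≠ 0 → ω z ≠ 0) → deriv ω 0 ≠ 0 → -Real.log ‖deriv ω 0‖ ≤ 1 →
      ExpRep R0 a (F ∘ ω) (lam + -Real.log ‖deriv ω 0‖) (e + K * (-Real.log ‖deriv ω 0‖) ^ 2) := by
  obtain ⟨K, hK0, hK⟩ := unif_step hR00 hR0 hΛ
  refine ⟨K, hK0, ?_⟩
  rintro a F ω lam e ha ha1 ⟨l, hl, hlre, hl0, hF, hgood⟩ hlam hω hmaps hω0 hne hd hδ1
  set v := dslope ω 0 with hv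
  have hvd : DifferentiableOn ℂ v (ball 0 1) :=
    (Complex.differentiableOn_dslope (isOpen_ball.mem_nhds (mem_ball_self one_pos))).2 hω
  have hv0 : v 0 = deriv ω 0 := dslope_same _ _
  have hvz : ∀ z, ω z = z * v z := fun z => by
    have := sub_smul_dslope ω 0 z
    simpa [hω0] using this.symm
  have hv1 : ∀ z ∈ ball (0 : ℂ) 1, ‖v z‖ ≤ 1 := by
    intro z hz
    by_cases hz0 : z = 0
    · rw [hz0, hv0]
      exact Complex.norm_deriv_le_one_of_mapsTo_ball hω (by
        rw [hω0]; exact fun z hz => ball_subset_closedBall (hmaps hz)) one_pos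
    · have h1 := Complex.norm_le_norm_of_mapsTo_ball (R := 1) hω
        (fun z hz => ball_subset_closedBall (hmaps hz)) hω0 (by simpa using hz)
      rw [hvz, norm_mul] at h1
      have : 0 < ‖z‖ := norm_pos_iff.2 hz0
      exact le_of_mul_le_mul_left (by linarith) this
  have haz : ∀ z ∈ ball (0 : ℂ) 1, (a : ℂ) * z ∈ ball (0 : ℂ) a := fun z hz => by
    rw [mem_ball_zero_iff] at *
    rw [norm_mul, Complex.norm_real, Real.norm_of_nonneg ha.le]
    nlinarith
  have haz1 : ∀ z ∈ ball (0 : ℂ) 1, (a : ℂ) * z ∈ ball (0 : ℂ) 1 := fun z hz =>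
    ball_subset_ball ha1 (haz z hz)
  have hwd : DifferentiableOn ℂ (fun z => v (a * z)) (ball 0 1) :=
    hvd.comp (by fun_prop) haz1
  have hw0 : ∀ z ∈ ball (0 : ℂ) 1, v (a * z) ≠ 0 := by
    intro z hz
    by_cases hz0 : z = 0
    · rw [hz0, mul_zero, hv0]; exact hd
    · have hz1 : (a : ℂ) * z ≠ 0 := mul_ne_zero (by exact_mod_cast ha.ne') hz0
      have := hne _ (haz z hz) hz1
      rw [hvz] at this
      exact right_ne_zero_of_mul this
  obtain ⟨L, hLd, hL0, hL⟩ := exists_log hwd hw0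
    (Complex.exp_log (by have := hw0 0 (by simp); simpa using this))
  have hLre : ∀ z ∈ ball (0 : ℂ) 1, (L z).re ≤ 0 := by
    intro z hz
    have h1 := hv1 _ (haz1 z hz)
    rw [← hL z hz, Complex.norm_exp, Real.exp_le_one_iff] at h1
    exact h1
  have hL0re : (L 0).re = Real.log ‖deriv ω 0‖ := by
    rw [hL0, Complex.log_re, mul_zero, hv0]
  set δ := -Real.log ‖deriv ω 0‖ with hδ
  set φ := (L 0).im with hφ
  -- rotate so that the value of `h` at the origin becomes real
  have hu : ‖cexp (φ * I)‖ = 1 := Complex.norm_exp_ofReal_mul_I φ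
  have g1 := hgood.rot hR0 hl hu 0
  have hl1 : DifferentiableOn ℂ (fun z => l (cexp (φ * I) * z) + (0 : ℝ) * I) (ball 0 1) :=
    (hl.comp (by fun_prop) fun z hz => rot_mem hu hz).add_const _
  have hL00 : L 0 = Real.log ‖deriv ω 0‖ + φ * I := by
    rw [← hL0re]; exact (Complex.re_add_im _).symm
  have g2 := hK (fun z => l (cexp (φ * I) * z) + (0 : ℝ) * I) (fun z => -L z + φ * I) δ e hl1
    (fun z hz => by simpa using hlre _ (rot_mem hu hz)) (by simp [hl0, hlam])
    (hLd.neg.add_const _) (fun z hz => by simpa using hLre z hz) (by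
      rw [hL00, hδ]; push_cast; ring) hδ1 g1
  have hmem : ∀ z ∈ ball (0 : ℂ) 1, z * cexp (L z) ∈ ball (0 : ℂ) 1 := fun z hz => by
    have := omega_mem_ball (h := fun z => -L z) (z := z) (by simpa using hLre z hz) hz
    simpa using this
  have hmd : DifferentiableOn ℂ (fun z => l (z * cexp (L z)) + L z) (ball 0 1) :=
    (hl.comp (differentiableOn_id.mul hLd.cexp) hmem).add hLd
  have e2 : (fun z => (fun z => l (cexp (φ * I) * z) + (0 : ℝ) * I) (z * cexp (-(-L z + φ * I)))
      - (-L z + φ * I)) = fun z => (l (z * cexp (L z)) + L z) - φ * I := by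
    funext z
    have : cexp (φ * I) * (z * cexp (-(-L z + φ * I))) = z * cexp (L z) := by
      rw [mul_left_comm, ← Complex.exp_add]; ring_nf
    simp only [this]
    push_cast
    ring
  rw [e2] at g2
  have g3 := g2.rot hR0 (hmd.sub_const _) (u := 1) (by simp) φ
  simp only [one_mul, sub_add_cancel] at g3
  refine ⟨fun z => l (z * cexp (L z)) + L z, hmd, fun z hz => ?_, ?_, fun z hz => ?_, g3⟩
  · rw [add_re]
    linarith [hlre _ (hmem z hz), hLre z hz]
  · simp [hl0, hL0re, hδ]
    ring
  · have : ω (a * z) = a * (z * cexp (L z)) := by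
      rw [hvz, ← hL z hz]; ring
    rw [Function.comp_apply, this, hF _ (hmem z hz), Complex.exp_add]
    ring

/-! ### Univalent functions and the square root transform -/

/-- The inverse of a univalent function is holomorphic on the (open) image. -/
theorem exists_inv {g : ℂ → ℂ} (hg : DifferentiableOn ℂ g (ball 0 1))
    (hinj : Set.InjOn g (ball 0 1)) :
    IsOpen (g '' ball 0 1) ∧ ∃ k : ℂ → ℂ, DifferentiableOn ℂ k (g '' ball 0 1) ∧
      ∀ z ∈ ball (0 : ℂ) 1, k (g z) = z := by
  have hopen : ∀ s ⊆ ball (0 : ℂ) 1, IsOpen s → IsOpen (g '' s) := by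
    have han : AnalyticOnNhd ℂ g (ball 0 1) := hg.analyticOnNhd isOpen_ball
    refine (han.is_constant_or_isOpen (convex_ball (0 : ℂ) 1).isPreconnected).resolve_left ?_
    rintro ⟨w, hw⟩
    have h1 : (1 / 2 : ℂ) ∈ ball (0 : ℂ) 1 := by rw [mem_ball_zero_iff]; norm_num
    have h2 : (0 : ℂ) ∈ ball (0 : ℂ) 1 := by simp
    have := hinj h1 h2 ((hw _ h1).trans (hw _ h2).symm)
    norm_num at this
  have hΩ := hopen _ subset_rfl isOpen_ball
  refine ⟨hΩ, Function.invFunOn g (ball 0 1), ?_, fun z hz => hinj.leftInvOn_invFunOn hz⟩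
  set k := Function.invFunOn g (ball 0 1) with hk
  have hkg : ∀ z ∈ ball (0 : ℂ) 1, k (g z) = z := fun z hz => hinj.leftInvOn_invFunOn hz
  have hgk : ∀ w ∈ g '' ball 0 1, g (k w) = w := by
    rintro _ ⟨z, hz, rfl⟩; rw [hkg z hz]
  have hcont : ∀ w ∈ g '' ball 0 1, ContinuousAt k w := by
    rintro _ ⟨z, hz, rfl⟩
    rw [ContinuousAt, hkg z hz]
    intro V hV
    obtain ⟨U, hUV, hU, hzU⟩ := _root_.mem_nhds_iff.1 (Filter.inter_mem hV (isOpen_ball.mem_nhds hz))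
    rw [Filter.mem_map]
    refine Filter.mem_of_superset ((hopen U (fun x hx => (hUV hx).2) hU).mem_nhds ⟨z, hzU, rfl⟩) ?_
    rintro _ ⟨x, hx, rfl⟩
    rw [Set.mem_preimage, hkg x (hUV hx).2]
    exact (hUV hx).1
  have hreg : ∀ z ∈ ball (0 : ℂ) 1, deriv g z ≠ 0 → DifferentiableAt ℂ k (g z) := by
    intro z hz hd
    have h1 : HasDerivAt g (deriv g z) (k (g z)) := by
      rw [hkg z hz]
      exact (hg.differentiableAt (isOpen_ball.mem_nhds hz)).hasDerivAt
    exact (h1.of_local_left_inverse (hcont _ ⟨z, hz, rfl⟩) hd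
      (Filter.eventually_of_mem (hΩ.mem_nhds ⟨z, hz, rfl⟩) hgk)).differentiableAt
  rintro _ ⟨z, hz, rfl⟩
  refine DifferentiableAt.differentiableWithinAt ?_
  refine (Complex.analyticAt_of_differentiable_on_punctured_nhds_of_continuousAt ?_
    (hcont _ ⟨z, hz, rfl⟩)).differentiableAt
  -- the critical points of `g` are isolated
  have hda : AnalyticAt ℂ (deriv g) z :=
    (hg.deriv isOpen_ball).analyticOnNhd isOpen_ball z hz
  have hne : ∀ᶠ x in 𝓝[≠] z, deriv g x ≠ 0 := by
    refine hda.eventually_eq_zero_or_eventually_ne_zero.resolve_left fun h0 => ?_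
    obtain ⟨ε, hε, hball⟩ := Metric.eventually_nhds_iff_ball.1
      (h0.and (isOpen_ball.mem_nhds hz))
    have hsub : ball z ε ⊆ ball 0 1 := fun x hx => (hball x hx).2
    have hx : z + (ε / 2 : ℝ) ∈ ball z ε := by
      rw [mem_ball, dist_eq_norm, add_sub_cancel_left, Complex.norm_real,
        Real.norm_of_nonneg (by linarith)]
      linarith
    have := IsOpen.is_const_of_deriv_eq_zero (𝕜 := ℂ) isOpen_ball
      (convex_ball z ε).isPreconnected (hg.mono hsub) (fun x hx => (hball x hx).1) hx
      (mem_ball_self hε)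
    have := hinj (hsub hx) hz this
    have h3 : ((ε / 2 : ℝ) : ℂ) = 0 := by simpa using this
    have h4 : ε / 2 = 0 := by exact_mod_cast h3
    linarith
  have ht : Filter.Tendsto k (𝓝[≠] (g z)) (𝓝[≠] z) := by
    rw [tendsto_nhdsWithin_iff]
    constructor
    · have := hcont _ ⟨z, hz, rfl⟩
      rw [ContinuousAt, hkg z hz] at this
      exact this.mono_left nhdsWithin_le_nhds
    · filter_upwards [self_mem_nhdsWithin, nhdsWithin_le_nhds (hΩ.mem_nhds ⟨z, hz, rfl⟩)]
        with w hw hwΩ hc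
      rw [Set.mem_singleton_iff] at hc
      exact hw (by rw [← hgk w hwΩ, hc]; rfl)
  filter_upwards [ht.eventually hne, nhdsWithin_le_nhds (hΩ.mem_nhds ⟨z, hz, rfl⟩)] with w h1 h2
  obtain ⟨x, hx, rfl⟩ := h2
  rw [hkg x hx] at h1
  exact hreg x hx h1

theorem univ_deriv_ne_zero {g : ℂ → ℂ} (hg : DifferentiableOn ℂ g (ball 0 1))
    (hinj : Set.InjOn g (ball 0 1)) {z : ℂ} (hz : z ∈ ball (0 : ℂ) 1) : deriv g z ≠ 0 := by
  obtain ⟨hΩ, k, hk, hkg⟩ := exists_inv hg hinj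
  have h1 := (hk.differentiableAt (hΩ.mem_nhds ⟨z, hz, rfl⟩)).hasDerivAt
  have h2 := (hg.differentiableAt (isOpen_ball.mem_nhds hz)).hasDerivAt
  have h3 := h1.comp z h2
  have h4 : HasDerivAt (k ∘ g) 1 z := (hasDerivAt_id z).congr_of_eventuallyEq
    (Filter.eventually_of_mem (isOpen_ball.mem_nhds hz) hkg)
  intro h0
  have := h3.unique h4
  rw [h0] at this
  simp at this

/-- If the image contains the circle of radius `r`, it contains the disk of radius `r`. -/
theorem image_ball_of_sphere {g : ℂ → ℂ} (hg : DifferentiableOn ℂ g (ball 0 1))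
    (hinj : Set.InjOn g (ball 0 1)) {r : ℝ} (hr : 0 < r)
    (hs : sphere (0 : ℂ) r ⊆ g '' ball 0 1) : ball (0 : ℂ) r ⊆ g '' ball 0 1 := by
  intro p hp
  by_contra hpn
  obtain ⟨hΩ, k, hk, hkg⟩ := exists_inv hg hinj
  have hne : ∀ z ∈ ball (0 : ℂ) 1, g z - p ≠ 0 := fun z hz hc =>
    hpn ⟨z, hz, sub_eq_zero.1 hc⟩
  obtain ⟨L, hLd, -, hL⟩ := exists_log (hg.sub_const p) hne
    (Complex.exp_log (hne 0 (by simp)))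
  have hmap : Set.MapsTo k (g '' ball 0 1) (ball 0 1) := by
    rintro _ ⟨z, hz, rfl⟩
    rwa [hkg z hz]
  -- `L ∘ k` is a primitive of `1 / (w - p)` on the image
  have hH : ∀ w ∈ g '' ball 0 1, HasDerivAt (L ∘ k) (w - p)⁻¹ w := by
    intro w hw
    have hd : DifferentiableAt ℂ (L ∘ k) w :=
      (hLd.comp hk hmap).differentiableAt (hΩ.mem_nhds hw)
    have h1 := hd.hasDerivAt.cexp
    have h2 : HasDerivAt (fun w => cexp ((L ∘ k) w)) 1 w := by
      refine ((hasDerivAt_id w).sub_const p).congr_of_eventuallyEq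
        (Filter.eventually_of_mem (hΩ.mem_nhds hw) ?_)
      rintro _ ⟨z, hz, rfl⟩
      simp only [Function.comp_apply, hkg z hz, hL z hz, id]
    have h3 := h1.unique h2
    have h4 : cexp ((L ∘ k) w) = w - p := by
      obtain ⟨z, hz, rfl⟩ := hw
      simp only [Function.comp_apply, hkg z hz, hL z hz]
    rw [h4] at h3
    rw [← eq_inv_of_mul_eq_one_right h3]
    exact hd.hasDerivAt
  have h1 := circleIntegral.integral_eq_zero_of_hasDerivWithinAt hr.le
    (fun w hw => (hH w (hs hw)).hasDerivWithinAt)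
  have h2 := circleIntegral.integral_sub_inv_of_mem_ball hp
  rw [h1] at h2
  exact Complex.two_pi_I_ne_zero h2.symm

/-- The Schwarz lemma for the inverse function. -/
theorem deriv_ge_of_image {g : ℂ → ℂ} (hg : DifferentiableOn ℂ g (ball 0 1))
    (hinj : Set.InjOn g (ball 0 1)) (h0 : g 0 = 0) {r : ℝ} (hr : 0 < r)
    (hs : ball (0 : ℂ) r ⊆ g '' ball 0 1) : r ≤ ‖deriv g 0‖ := by
  obtain ⟨hΩ, k, hk, hkg⟩ := exists_inv hg hinj
  have hz : (0 : ℂ) ∈ ball (0 : ℂ) 1 := by simp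
  have hk0 : k 0 = 0 := by rw [← h0, hkg 0 hz, h0]
  have h1 := (hk.differentiableAt (hΩ.mem_nhds ⟨0, hz, rfl⟩)).hasDerivAt
  have h2 := (hg.differentiableAt (isOpen_ball.mem_nhds hz)).hasDerivAt
  have h3 := h1.comp 0 h2
  have h4 : HasDerivAt (k ∘ g) 1 0 := (hasDerivAt_id (0 : ℂ)).congr_of_eventuallyEq
    (Filter.eventually_of_mem (isOpen_ball.mem_nhds hz) hkg)
  have h5 := h3.unique h4
  rw [h0] at h5
  have h6 := Complex.norm_deriv_le_div_of_mapsTo_ball (f := k) (c := 0) (R₁ := r) (R₂ := 1)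
    (hk.mono hs) (by
      rw [hk0]
      intro w hw
      obtain ⟨z, hz, rfl⟩ := hs hw
      rw [hkg z hz]; exact ball_subset_closedBall hz) hr
  have h7 := congrArg norm h5
  rw [norm_mul, norm_one] at h7
  rw [le_div_iff₀ hr] at h6
  have := norm_nonneg (deriv g 0)
  by_contra hc
  push Not at hc
  have h8 : 0 < ‖deriv k 0‖ := by
    by_contra h9
    have : ‖deriv k 0‖ = 0 := le_antisymm (not_lt.1 h9) (norm_nonneg _)
    rw [this] at h7
    simp at h7
  nlinarith

/-- The disk automorphism `(c - z) / (1 - c z)`. -/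
noncomputable def bl (c : ℝ) (z : ℂ) : ℂ := (c - z) / (1 - c * z)

theorem bl_den {c : ℝ} (hc0 : 0 ≤ c) (hc1 : c < 1) {z : ℂ} (hz : z ∈ ball (0 : ℂ) 1) :
    1 - (c : ℂ) * z ≠ 0 := by
  intro h
  have h1 : (c : ℂ) * z = 1 := (sub_eq_zero.1 h).symm
  have h2 := congrArg norm h1
  rw [norm_mul, Complex.norm_real, Real.norm_of_nonneg hc0, norm_one] at h2
  rw [mem_ball_zero_iff] at hz
  nlinarith [norm_nonneg z]

theorem bl_diff {c : ℝ} (hc0 : 0 ≤ c) (hc1 : c < 1) : DifferentiableOn ℂ (bl c) (ball 0 1) := by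
  refine DifferentiableOn.div (by fun_prop) (by fun_prop) fun z hz => bl_den hc0 hc1 hz

theorem bl_mem {c : ℝ} (hc0 : 0 ≤ c) (hc1 : c < 1) {z : ℂ} (hz : z ∈ ball (0 : ℂ) 1) :
    bl c z ∈ ball (0 : ℂ) 1 := by
  have hd := norm_pos_iff.2 (bl_den hc0 hc1 hz)
  rw [mem_ball_zero_iff] at *
  rw [bl, norm_div, div_lt_one hd, ← sq_lt_sq₀ (norm_nonneg _) (norm_nonneg _),
    ← Complex.normSq_eq_norm_sq, ← Complex.normSq_eq_norm_sq, Complex.normSq_apply,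
    Complex.normSq_apply]
  have h1 : ‖z‖ ^ 2 < 1 := by nlinarith [norm_nonneg z]
  rw [← Complex.normSq_eq_norm_sq, Complex.normSq_apply] at h1
  simp
  nlinarith [mul_pos (by linarith : 0 < 1 - (z.re * z.re + z.im * z.im)) (by nlinarith : 0 < 1 - c ^ 2)]

theorem bl_bl {c : ℝ} (hc0 : 0 ≤ c) (hc1 : c < 1) {z : ℂ} (hz : z ∈ ball (0 : ℂ) 1) :
    bl c (bl c z) = z := by
  have h1 := bl_den hc0 hc1 hz
  have h2 : (1 : ℂ) - c ^ 2 ≠ 0 := by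
    have : (1 : ℝ) - c ^ 2 ≠ 0 := by nlinarith
    exact_mod_cast this
  have h3 := bl_den hc0 hc1 (bl_mem hc0 hc1 hz)
  rw [bl, div_eq_iff h3]
  unfold bl
  field_simp
  ring

/-- Undoing the square root transform: squaring between two disk automorphisms is a degree-two Blaschke
product fixing `0`. -/
theorem bl_sq {s : ℝ} (hs0 : 0 < s) (hs1 : s < 1) {k : ℂ} (hkm : k ∈ ball (0 : ℂ) 1) :
    bl (s ^ 2) (bl s k ^ 2) = k * bl (2 * s / (1 + s ^ 2)) k := by
  have hr0 : 0 ≤ s ^ 2 := by positivity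
  have hr1 : s ^ 2 < 1 := by nlinarith
  have a0 : 0 ≤ 2 * s / (1 + s ^ 2) := by positivity
  have a1 : 2 * s / (1 + s ^ 2) < 1 := by
    rw [div_lt_one (by positivity)]; nlinarith [sq_pos_of_pos (by linarith : 0 < 1 - s)]
  have d1 := bl_den hs0.le hs1 hkm
  have d2 := bl_den a0 a1 hkm
  have hb2 : bl s k ^ 2 ∈ ball (0 : ℂ) 1 := by
    have := bl_mem hs0.le hs1 hkm
    rw [mem_ball_zero_iff] at *
    rw [norm_pow]
    exact pow_lt_one₀ (norm_nonneg _) this two_ne_zero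
  have d3 := bl_den hr0 hr1 hb2
  have hss : (1 : ℂ) + s ^ 2 ≠ 0 := by
    have : (1 : ℝ) + s ^ 2 ≠ 0 := by positivity
    exact_mod_cast this
  rw [bl, div_eq_iff d3]
  conv_rhs => rw [bl]
  push_cast at d2 ⊢
  have d4 : (1 : ℂ) + s ^ 2 - 2 * s * k ≠ 0 := by
    intro hc
    apply d2
    field_simp
    linear_combination hc
  have e1 : ((2 : ℂ) * s / (1 + s ^ 2) - k) / (1 - 2 * s / (1 + s ^ 2) * k) =
      (2 * s - (1 + s ^ 2) * k) / (1 + s ^ 2 - 2 * s * k) := by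
    rw [div_eq_div_iff d2 d4]
    field_simp
  rw [e1, mul_div_assoc', div_mul_eq_mul_div, eq_div_iff d4]
  unfold bl
  field_simp
  ring

/-- The square root transform: a univalent self-map of the disk omitting `s²` factors through the
degree-two Blaschke product `z (a - z) / (1 - a z)`. -/
theorem lift_real {g : ℂ → ℂ} (hg : DifferentiableOn ℂ g (ball 0 1))
    (hinj : Set.InjOn g (ball 0 1)) (hm : Set.MapsTo g (ball 0 1) (ball 0 1)) (h0 : g 0 = 0)
    {s : ℝ} (hs0 : 0 < s) (hs1 : s < 1) (homit : ∀ z ∈ ball (0 : ℂ) 1, g z ≠ (s : ℂ) ^ 2) :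
    ∃ k : ℂ → ℂ, DifferentiableOn ℂ k (ball 0 1) ∧ Set.InjOn k (ball 0 1) ∧
      Set.MapsTo k (ball 0 1) (ball 0 1) ∧ k 0 = 0 ∧
      ∀ z ∈ ball (0 : ℂ) 1, g z = k z * bl (2 * s / (1 + s ^ 2)) (k z) := by
  have hr0 : 0 ≤ s ^ 2 := by positivity
  have hr1 : s ^ 2 < 1 := by nlinarith
  have hGd : DifferentiableOn ℂ (fun z => bl (s ^ 2) (g z)) (ball 0 1) := (bl_diff hr0 hr1).comp hg hm
  have hG0 : ∀ z ∈ ball (0 : ℂ) 1, bl (s ^ 2) (g z) ≠ 0 := by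
    intro z hz
    refine div_ne_zero ?_ (bl_den hr0 hr1 (hm hz))
    have := homit z hz
    rw [sub_ne_zero]
    push_cast
    exact this.symm
  obtain ⟨L, hLd, hL0, hL⟩ := exists_log hGd hG0 (c := 2 * Real.log s) (by
    rw [h0, bl, two_mul, Complex.exp_add, ← Complex.ofReal_exp, Real.exp_log hs0]
    push_cast
    simp; ring)
  set q : ℂ → ℂ := fun z => cexp (L z / 2) with hq
  have hqd : DifferentiableOn ℂ q (ball 0 1) := (hLd.div_const 2).cexp
  have hq2 : ∀ z ∈ ball (0 : ℂ) 1, q z ^ 2 = bl (s ^ 2) (g z) := by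
    intro z hz
    rw [← hL z hz, hq, ← Complex.exp_nat_mul]
    congr 1; push_cast; ring
  have hqm : Set.MapsTo q (ball 0 1) (ball 0 1) := by
    intro z hz
    have h1 := bl_mem hr0 hr1 (hm hz)
    rw [← hq2 z hz, mem_ball_zero_iff, norm_pow] at h1
    rw [mem_ball_zero_iff]
    by_contra hc
    push Not at hc
    nlinarith
  have hq0 : q 0 = s := by
    simp only [hq, hL0]
    rw [mul_div_cancel_left₀ _ two_ne_zero, ← Complex.ofReal_exp, Real.exp_log hs0]
  refine ⟨fun z => bl s (q z), (bl_diff hs0.le hs1).comp hqd hqm, ?_,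
    fun z hz => bl_mem hs0.le hs1 (hqm hz), by simp [hq0, bl], ?_⟩
  · intro x hx y hy hxy
    have h1 := congrArg (bl s) hxy
    simp only [bl_bl hs0.le hs1 (hqm hx), bl_bl hs0.le hs1 (hqm hy)] at h1
    have h2 : bl (s ^ 2) (g x) = bl (s ^ 2) (g y) := by rw [← hq2 x hx, ← hq2 y hy, h1]
    have h3 := congrArg (bl (s ^ 2)) h2
    rw [bl_bl hr0 hr1 (hm hx), bl_bl hr0 hr1 (hm hy)] at h3
    exact hinj hx hy h3
  · intro z hz
    have h1 : g z = bl (s ^ 2) (q z ^ 2) := by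
      rw [hq2 z hz, bl_bl hr0 hr1 (hm hz)]
    have h2 : q z = bl s (bl s (q z)) := (bl_bl hs0.le hs1 (hqm hz)).symm
    rw [h1]
    conv_lhs => rw [h2]
    exact bl_sq hs0 hs1 (bl_mem hs0.le hs1 (hqm hz))

/-! ### Decomposition of univalent self-maps -/

theorem ExpRep.mono {R0 a lam lam' e e' : ℝ} {F F' : ℂ → ℂ} (h : ExpRep R0 a F lam e)
    (ha : 0 < a) (ha1 : a ≤ 1)
    (hF : Set.EqOn F F' (ball 0 1)) (hl : lam = lam') (he : e ≤ e') : ExpRep R0 a F' lam' e' := by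
  obtain ⟨l, h1, h2, h3, h4, h5⟩ := h
  refine ⟨l, h1, h2, hl ▸ h3, fun z hz => ?_, fun r hr hr' => ?_⟩
  · rw [← h4 z hz, hF]
    rw [mem_ball_zero_iff] at *
    rw [norm_mul, Complex.norm_real, Real.norm_of_nonneg ha.le]
    nlinarith [norm_nonneg z]
  · obtain ⟨h6, h7⟩ := h5 r hr hr'
    exact ⟨by linarith, by linarith⟩

/-- The degree-two Blaschke product `z (a - v z) / (1 - a v z)`, an admissible `ω` for `step_rep`. -/
noncomputable def qm (a : ℝ) (v z : ℂ) : ℂ := z * bl a (v * z)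

theorem qm_props {a : ℝ} (ha0 : 0 < a) (ha1 : a < 1) {v : ℂ} (hv : ‖v‖ = 1) :
    DifferentiableOn ℂ (qm a v) (ball 0 1) ∧ Set.MapsTo (qm a v) (ball 0 1) (ball 0 1) ∧
      qm a v 0 = 0 ∧ (∀ z ∈ ball (0 : ℂ) a, z ≠ 0 → qm a v z ≠ 0) ∧ deriv (qm a v) 0 = a := by
  have hb : DifferentiableOn ℂ (fun z => bl a (v * z)) (ball 0 1) :=
    (bl_diff ha0.le ha1).comp (by fun_prop) fun z hz => rot_mem hv hz
  refine ⟨differentiableOn_id.mul hb, fun z hz => ?_, by simp [qm], fun z hz hz0 => ?_, ?_⟩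
  · have h1 := bl_mem ha0.le ha1 (rot_mem hv hz)
    rw [mem_ball_zero_iff] at *
    rw [qm, norm_mul]
    nlinarith [norm_nonneg z, norm_nonneg (bl a (v * z))]
  · rw [mem_ball_zero_iff] at hz
    refine mul_ne_zero hz0 (div_ne_zero ?_ (bl_den ha0.le ha1 (rot_mem hv ?_)))
    · intro h
      have := congrArg norm (sub_eq_zero.1 h)
      rw [Complex.norm_real, Real.norm_of_nonneg ha0.le, norm_mul, hv, one_mul] at this
      exact hz.ne' this
    · rw [mem_ball_zero_iff]; linarith
  · have h1 := (hb.differentiableAt (isOpen_ball.mem_nhds (mem_ball_self one_pos))).hasDerivAt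
    have h2 := (hasDerivAt_id (0 : ℂ)).mul h1
    have h3 := h2.deriv
    simp only [id, mul_zero, one_mul, zero_mul, add_zero] at h3
    rw [show (id * fun z => bl a (v * z)) = qm a v from rfl] at h3
    rw [h3, bl]; simp

/-- A univalent self-map omitting a point `p` with `|p| = s²` factors through `qm`. -/
theorem lift_rot {g : ℂ → ℂ} (hg : DifferentiableOn ℂ g (ball 0 1))
    (hinj : Set.InjOn g (ball 0 1)) (hm : Set.MapsTo g (ball 0 1) (ball 0 1)) (h0 : g 0 = 0)
    {s : ℝ} (hs0 : 0 < s) (hs1 : s < 1) {p : ℂ} (hp : ‖p‖ = s ^ 2)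
    (homit : ∀ z ∈ ball (0 : ℂ) 1, g z ≠ p) :
    ∃ v : ℂ, ‖v‖ = 1 ∧ ∃ k : ℂ → ℂ, DifferentiableOn ℂ k (ball 0 1) ∧ Set.InjOn k (ball 0 1) ∧
      Set.MapsTo k (ball 0 1) (ball 0 1) ∧ k 0 = 0 ∧
      ∀ z ∈ ball (0 : ℂ) 1, g z = qm (2 * s / (1 + s ^ 2)) v (k z) := by
  have hsC : (s : ℂ) ≠ 0 := by exact_mod_cast hs0.ne'
  have hp0 : p ≠ 0 := by
    intro h
    rw [h, norm_zero] at hp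
    exact (pow_pos hs0 2).ne hp
  set v : ℂ := s ^ 2 / p with hvdef
  have hv : ‖v‖ = 1 := by
    rw [hvdef, norm_div, norm_pow, Complex.norm_real, Real.norm_of_nonneg hs0.le, hp]
    exact div_self (pow_pos hs0 2).ne'
  have hv0 : v ≠ 0 := by intro h; rw [h, norm_zero] at hv; exact zero_ne_one hv
  have hvi : ‖v⁻¹‖ = 1 := by rw [norm_inv, hv, inv_one]
  obtain ⟨k, hk1, hk2, hk3, hk4, hk5⟩ := lift_real (g := fun z => v * g z) (hg.const_mul v)
    (fun x hx y hy hxy => hinj hx hy (mul_left_cancel₀ hv0 hxy))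
    (fun z hz => rot_mem hv (hm hz)) (by simp [h0]) hs0 hs1 (fun z hz hc => by
      apply homit z hz
      apply mul_left_cancel₀ hv0
      rw [hc, hvdef, div_mul_cancel₀ _ hp0])
  refine ⟨v, hv, fun z => v⁻¹ * k z, hk1.const_mul _, fun x hx y hy hxy =>
    hk2 hx hy (mul_left_cancel₀ (inv_ne_zero hv0) hxy), fun z hz => rot_mem hvi (hk3 hz),
    by simp [hk4], fun z hz => ?_⟩
  have := hk5 z hz
  rw [qm, mul_inv_cancel_left₀ hv0, mul_assoc, ← this, inv_mul_cancel_left₀ hv0]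

/-- Factors `qm a v` are split off `g` while it omits a point of modulus `s²`. Each increases `|g' 0|` by
the factor `1 / a`, so the induction is on `n` with `aⁿ ≤ |g' 0|`; a map whose image contains the circle
of radius `s²` is absorbed as one last step. -/
theorem machine {R0 Λ : ℝ} (hR00 : 0 ≤ R0) (hR0 : R0 < 1) (hΛ : 0 ≤ Λ) :
    ∃ K : ℝ, 0 ≤ K ∧ ∀ s a : ℝ, 0 < s → s < 1 → a = 2 * s / (1 + s ^ 2) → -Real.log a ≤ 1 →
      -Real.log (s ^ 2) ≤ 1 → ∀ (n : ℕ) (F g : ℂ → ℂ) (lam e : ℝ), ExpRep R0 a F lam e →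
      DifferentiableOn ℂ g (ball 0 1) → Set.InjOn g (ball 0 1) →
      Set.MapsTo g (ball 0 1) (ball 0 1) → g 0 = 0 → a ^ n ≤ ‖deriv g 0‖ →
      lam - Real.log ‖deriv g 0‖ ≤ Λ →
      ExpRep R0 a (F ∘ g) (lam - Real.log ‖deriv g 0‖)
        (e + K * (n * Real.log a ^ 2 + Real.log (s ^ 2) ^ 2)) := by
  obtain ⟨K, hK0, hK⟩ := step_rep hR00 hR0 hΛ
  refine ⟨K, hK0, fun s a hs0 hs1 ha hla hls n => ?_⟩
  have ha0 : 0 < a := by rw [ha]; positivity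
  have ha1 : a < 1 := by
    rw [ha, div_lt_one (by positivity)]; nlinarith [sq_pos_of_pos (by linarith : 0 < 1 - s)]
  have hs2 : 0 < s ^ 2 := by positivity
  have hz : (0 : ℂ) ∈ ball (0 : ℂ) 1 := by simp
  have hd1 : ∀ g : ℂ → ℂ, DifferentiableOn ℂ g (ball 0 1) → Set.MapsTo g (ball 0 1) (ball 0 1) →
      g 0 = 0 → ‖deriv g 0‖ ≤ 1 := by
    intro g hg hm h0
    have := Complex.norm_deriv_le_div_of_mapsTo_ball (f := g) (c := 0) (R₁ := 1) (R₂ := 1) hg (by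
      rw [h0]; exact fun z hz => ball_subset_closedBall (hm hz)) one_pos
    simpa using this
  -- the last step, when nothing on the circle of radius `s²` is omitted
  have term : ∀ (n : ℕ) (F g : ℂ → ℂ) (lam e : ℝ), ExpRep R0 a F lam e →
      DifferentiableOn ℂ g (ball 0 1) → Set.InjOn g (ball 0 1) →
      Set.MapsTo g (ball 0 1) (ball 0 1) → g 0 = 0 →
      lam - Real.log ‖deriv g 0‖ ≤ Λ → sphere (0 : ℂ) (s ^ 2) ⊆ g '' ball 0 1 →
      ExpRep R0 a (F ∘ g) (lam - Real.log ‖deriv g 0‖)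
        (e + K * (n * Real.log a ^ 2 + Real.log (s ^ 2) ^ 2)) := by
    intro n F g lam e hF hg hinj hm h0 hlam hsph
    have h1 := deriv_ge_of_image hg hinj h0 hs2 (image_ball_of_sphere hg hinj hs2 hsph)
    have h2 := Real.log_le_log hs2 h1
    have h3 := Real.log_nonpos (norm_nonneg _) (hd1 g hg hm h0)
    have := hK a F g lam e ha0 ha1.le hF (by linarith) hg hm h0 (fun z hz' hz0 hc => hz0 (hinj
      (ball_subset_ball ha1.le hz') hz (hc.trans h0.symm))) (univ_deriv_ne_zero hg hinj hz)
      (by linarith)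
    refine this.mono ha0 ha1.le (fun _ _ => rfl) (by ring) ?_
    have h4 : (-Real.log ‖deriv g 0‖) ^ 2 ≤ Real.log (s ^ 2) ^ 2 := by
      nlinarith only [h2, h3]
    have h5 : 0 ≤ (n : ℝ) * Real.log a ^ 2 := by positivity
    nlinarith only [h4, h5, hK0, mul_le_mul_of_nonneg_left h4 hK0, mul_nonneg hK0 h5]
  have lift : ∀ (g : ℂ → ℂ),
      DifferentiableOn ℂ g (ball 0 1) → Set.InjOn g (ball 0 1) →
      Set.MapsTo g (ball 0 1) (ball 0 1) → g 0 = 0 → ¬ sphere (0 : ℂ) (s ^ 2) ⊆ g '' ball 0 1 →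
      ∃ v : ℂ, ‖v‖ = 1 ∧ ∃ k : ℂ → ℂ, DifferentiableOn ℂ k (ball 0 1) ∧ Set.InjOn k (ball 0 1) ∧
      Set.MapsTo k (ball 0 1) (ball 0 1) ∧ k 0 = 0 ∧
      (∀ z ∈ ball (0 : ℂ) 1, g z = qm a v (k z)) ∧ ‖deriv g 0‖ = a * ‖deriv k 0‖ := by
    intro g hg hinj hm h0 hsph
    obtain ⟨p, hp, hpn⟩ := Set.not_subset.1 hsph
    rw [mem_sphere_zero_iff_norm] at hp
    obtain ⟨v, hv, k, hk1, hk2, hk3, hk4, hk5⟩ := lift_rot hg hinj hm h0 hs0 hs1 hp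
      (fun z hz hc => hpn ⟨z, hz, hc⟩)
    rw [← ha] at hk5
    refine ⟨v, hv, k, hk1, hk2, hk3, hk4, hk5, ?_⟩
    obtain ⟨q1, q2, q3, q4, q5⟩ := qm_props ha0 ha1 hv
    have e1 := (hk1.differentiableAt (isOpen_ball.mem_nhds hz)).hasDerivAt
    have e2 : HasDerivAt (qm a v) a (k 0) := by
      rw [hk4, ← q5]
      exact (q1.differentiableAt (isOpen_ball.mem_nhds hz)).hasDerivAt
    have e3 := (e2.comp 0 e1).congr_of_eventuallyEq
      (Filter.eventually_of_mem (isOpen_ball.mem_nhds hz) hk5)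
    rw [e3.deriv, norm_mul, Complex.norm_real, Real.norm_of_nonneg ha0.le]
  induction n with
  | zero =>
    intro F g lam e hF hg hinj hm h0 hn hlam
    by_cases hsph : sphere (0 : ℂ) (s ^ 2) ⊆ g '' ball 0 1
    · exact term 0 F g lam e hF hg hinj hm h0 hlam hsph
    · obtain ⟨v, hv, k, hk1, hk2, hk3, hk4, hk5, hk6⟩ := lift g hg hinj hm h0 hsph
      have := hd1 k hk1 hk3 hk4
      rw [hk6, pow_zero] at hn
      nlinarith
  | succ n ih =>
    intro F g lam e hF hg hinj hm h0 hn hlam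
    by_cases hsph : sphere (0 : ℂ) (s ^ 2) ⊆ g '' ball 0 1
    · exact term (n + 1) F g lam e hF hg hinj hm h0 hlam hsph
    · obtain ⟨v, hv, k, hk1, hk2, hk3, hk4, hk5, hk6⟩ := lift g hg hinj hm h0 hsph
      obtain ⟨q1, q2, q3, q4, q5⟩ := qm_props ha0 ha1 hv
      have hkd := norm_pos_iff.2 (univ_deriv_ne_zero hk1 hk2 hz)
      have hna : ‖deriv (qm a v) 0‖ = a := by
        rw [q5, Complex.norm_real, Real.norm_of_nonneg ha0.le]
      have hlog : Real.log ‖deriv g 0‖ = Real.log a + Real.log ‖deriv k 0‖ := by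
        rw [hk6, Real.log_mul ha0.ne' hkd.ne']
      have hlk := Real.log_nonpos (norm_nonneg _) (hd1 k hk1 hk3 hk4)
      have hlna := Real.log_nonpos ha0.le ha1.le
      have h1 := hK a F (qm a v) lam e ha0 ha1.le hF (by linarith) q1 q2 q3 q4
        (by rw [q5]; exact_mod_cast ha0.ne') (by rwa [hna])
      rw [hna] at h1
      have h2 := ih _ k _ _ h1 hk1 hk2 hk3 hk4 (by
        rw [pow_succ'] at hn
        rw [hk6] at hn
        exact le_of_mul_le_mul_left hn ha0) (by linarith)
      refine h2.mono ha0 ha1.le (fun z hz => ?_) (by linarith) ?_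
      · simp only [Function.comp_apply, hk5 z hz]
      · push_cast
        apply le_of_eq
        ring

/-! ### Coefficient inequalities for univalent functions -/

theorem ExpRep_id {R0 a : ℝ} (hR0 : R0 < 1) : ExpRep R0 a id 0 0 := by
  refine ⟨fun _ => 0, differentiableOn_const 0, fun z _ => le_rfl, by simp, fun z _ => by simp, ?_⟩
  intro r hr0 hr
  have hr1 : r < 1 := by linarith
  have h2 : r ^ 2 < 1 := by nlinarith
  have hc : ∀ c : ℂ, ∀ n : ℕ, n ≠ 0 → cf (fun _ => c) n = 0 := by
    intro c n hn
    rw [cf, iteratedDeriv_const, if_neg hn, zero_div]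
  constructor
  · have h1 : Phi (r ^ 2) (fun _ => (0 : ℂ)) = 0 := by
      rw [Phi]
      convert! tsum_zero with n
      rcases eq_or_ne n 0 with rfl | hn
      · simp
      · simp [hc 0 n hn]
    rw [h1]
    have := Real.log_nonpos (by linarith : 0 ≤ 1 - r ^ 2) (by nlinarith)
    linarith
  · have h3 := Psi_hasSum (f := fun _ => cexp (-0 / 2)) hr0 hr1 (differentiableOn_const _)
    refine hasSum_le (fun n => ?_) h3 hasSum_zero
    rcases eq_or_ne n 0 with rfl | hn
    · simp
    · simp only [hc _ n hn]; simp

/-- A univalent self-map of the disk has an exponential representation with arbitrarily small error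
and with scale `a` arbitrarily close to `1`. -/
theorem approx {R0 : ℝ} (hR00 : 0 ≤ R0) (hR0 : R0 < 1) {g : ℂ → ℂ}
    (hg : DifferentiableOn ℂ g (ball 0 1)) (hinj : Set.InjOn g (ball 0 1))
    (hm : Set.MapsTo g (ball 0 1) (ball 0 1)) (h0 : g 0 = 0) {ε : ℝ} (hε : 0 < ε) :
    ∃ a : ℝ, 0 < a ∧ 1 - ε < a ∧ a < 1 ∧ ExpRep R0 a g (-Real.log ‖deriv g 0‖) ε := by
  have hz : (0 : ℂ) ∈ ball (0 : ℂ) 1 := by simp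
  have hd1 : ‖deriv g 0‖ ≤ 1 := by
    have := Complex.norm_deriv_le_div_of_mapsTo_ball (f := g) (c := 0) (R₁ := 1) (R₂ := 1) hg (by
      rw [h0]; exact fun z hz => ball_subset_closedBall (hm hz)) one_pos
    simpa using this
  have hd0 := norm_pos_iff.2 (univ_deriv_ne_zero hg hinj hz)
  obtain ⟨Λ, hΛ⟩ : ∃ Λ : ℝ, Λ = -Real.log ‖deriv g 0‖ := ⟨_, rfl⟩
  have hΛ0 : 0 ≤ Λ := by rw [hΛ]; exact neg_nonneg.2 (Real.log_nonpos hd0.le hd1)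
  obtain ⟨K, hK0, hK⟩ := machine hR00 hR0 hΛ0
  have ca : ContinuousAt (fun s : ℝ => 2 * s / (1 + s ^ 2)) 1 := by
    refine ContinuousAt.div (by fun_prop) (by fun_prop) (by norm_num)
  have cl : ContinuousAt (fun s : ℝ => -Real.log (2 * s / (1 + s ^ 2))) 1 :=
    (ca.log (by norm_num)).neg
  have cs : ContinuousAt (fun s : ℝ => -Real.log (s ^ 2)) 1 :=
    (ContinuousAt.log (by fun_prop) (by norm_num)).neg
  have cE : ContinuousAt (fun s : ℝ => K * (Λ * -Real.log (2 * s / (1 + s ^ 2)) +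
      (-Real.log (2 * s / (1 + s ^ 2))) ^ 2 + (-Real.log (s ^ 2)) ^ 2)) 1 :=
    (((cl.const_mul Λ).add (cl.pow 2)).add (cs.pow 2)).const_mul K
  have e1 : ∀ᶠ s : ℝ in 𝓝 1, 1 - ε < 2 * s / (1 + s ^ 2) :=
    ca.eventually_const_lt (by norm_num; exact hε)
  have e2 : ∀ᶠ s : ℝ in 𝓝 1, -Real.log (2 * s / (1 + s ^ 2)) < 1 :=
    cl.eventually_lt_const (by norm_num)
  have e3 : ∀ᶠ s : ℝ in 𝓝 1, -Real.log (s ^ 2) < 1 :=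
    cs.eventually_lt_const (by norm_num)
  have e4 : ∀ᶠ s : ℝ in 𝓝 1, K * (Λ * -Real.log (2 * s / (1 + s ^ 2)) +
      (-Real.log (2 * s / (1 + s ^ 2))) ^ 2 + (-Real.log (s ^ 2)) ^ 2) < ε :=
    cE.eventually_lt_const (by norm_num; exact hε)
  have e5 : ∀ᶠ s : ℝ in 𝓝 1, 0 < s := lt_mem_nhds one_pos
  obtain ⟨s, ⟨⟨⟨⟨⟨f1, f2⟩, f3⟩, f4⟩, hs0⟩, hs1⟩⟩ :=
    ((((((e1.and e2).and e3).and e4).and e5).filter_mono nhdsWithin_le_nhds).and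
      (self_mem_nhdsWithin : Set.Iio (1 : ℝ) ∈ 𝓝[<] 1)).exists
  obtain ⟨a, ha⟩ : ∃ a : ℝ, a = 2 * s / (1 + s ^ 2) := ⟨_, rfl⟩
  rw [← ha] at f1 f2 f4
  have ha0 : 0 < a := by rw [ha]; positivity
  have ha1 : a < 1 := by
    rw [ha, div_lt_one (by positivity)]; nlinarith [sq_pos_of_pos (by linarith : 0 < 1 - s)]
  obtain ⟨δ, hδ⟩ : ∃ δ : ℝ, δ = -Real.log a := ⟨_, rfl⟩
  have hδ0 : 0 < δ := by rw [hδ]; exact neg_pos.2 (Real.log_neg ha0 ha1)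
  have hn1 : Λ / δ ≤ ⌈Λ / δ⌉₊ := Nat.le_ceil _
  have hn2 : (⌈Λ / δ⌉₊ : ℝ) < Λ / δ + 1 := Nat.ceil_lt_add_one (by positivity)
  -- about `Λ / δ` steps, each with error `K δ²`: the total is `O(δ)`
  obtain ⟨n, hn⟩ : ∃ n : ℕ, n = ⌈Λ / δ⌉₊ := ⟨_, rfl⟩
  rw [← hn] at hn1 hn2
  rw [div_le_iff₀ hδ0] at hn1
  have hn3 : (n : ℝ) * δ ^ 2 ≤ Λ * δ + δ ^ 2 := by
    have : (n : ℝ) * δ ≤ Λ + δ := by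
      have h := mul_le_mul_of_nonneg_right hn2.le hδ0.le
      rwa [add_mul, div_mul_cancel₀ _ hδ0.ne', one_mul] at h
    nlinarith
  have hpow : a ^ n ≤ ‖deriv g 0‖ := by
    rw [← Real.log_le_log_iff (by positivity) hd0, Real.log_pow]
    rw [hδ, hΛ] at hn1
    linarith
  refine ⟨a, ha0, f1, ha1, ?_⟩
  have := hK s a hs0 hs1 ha f2.le f3.le n id g 0 0 (ExpRep_id hR0) hg hinj hm h0 hpow
    (by rw [hΛ]; linarith)
  refine this.mono ha0 ha1.le (fun _ _ => rfl) (by ring) ?_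
  rw [← hδ] at f4
  have h6 : Real.log a ^ 2 = δ ^ 2 := by rw [hδ]; ring
  rw [h6, zero_add]
  refine le_trans ?_ f4.le
  apply mul_le_mul_of_nonneg_left _ hK0
  nlinarith only [hn3]

theorem cf_scale {f : ℂ → ℂ} (hf : DifferentiableOn ℂ f (ball 0 1)) {u : ℂ} (hu : ‖u‖ ≤ 1) (c d : ℂ) :
    cf (fun z => c * f (u * z) + d) = fun n => c * (cf f n * u ^ n) + if n = 0 then d else 0 := by
  refine cf_unique fun z hz => ?_
  have hz' : u * z ∈ ball (0 : ℂ) 1 := by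
    rw [mem_ball_zero_iff] at *
    rw [norm_mul]
    nlinarith [norm_nonneg z, norm_nonneg u]
  have h1 := (cf_hasSum hf hz').mul_left c
  have h2 := hasSum_ite_eq 0 d
  have h3 := h1.add h2
  convert! h3 using 2 with n
  rw [mul_pow]
  split_ifs with hn
  · subst hn; simp
  · ring

/-- If `exp (l z) = κ exp (G z)` off the origin then `l - G` is constant. -/
theorem log_unique {l G : ℂ → ℂ} (hl : DifferentiableOn ℂ l (ball 0 1))
    (hG : DifferentiableOn ℂ G (ball 0 1)) {κ : ℂ}
    (h : ∀ z ∈ ball (0 : ℂ) 1, z ≠ 0 → cexp (l z) = κ * cexp (G z)) :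
    ∀ z ∈ ball (0 : ℂ) 1, l z = G z + (l 0 - G 0) := by
  have hz : (0 : ℂ) ∈ ball (0 : ℂ) 1 := by simp
  have hd := hl.fun_sub hG
  have h1 : ∀ z ∈ ball (0 : ℂ) 1, z ≠ 0 → cexp (l z - G z) = κ := by
    intro z hz hz0
    rw [Complex.exp_sub, h z hz hz0, mul_div_cancel_right₀ _ (Complex.exp_ne_zero _)]
  have hcd : ContinuousOn (deriv fun z => l z - G z) (ball 0 1) :=
    (hd.deriv isOpen_ball).continuousOn
  have h2 : ∀ z ∈ ball (0 : ℂ) 1, z ≠ 0 → deriv (fun z => l z - G z) z = 0 := by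
    intro z hz hz0
    have a1 := (hd.differentiableAt (isOpen_ball.mem_nhds hz)).hasDerivAt.cexp
    have hU : IsOpen (ball (0 : ℂ) 1 ∩ {0}ᶜ) := isOpen_ball.inter isOpen_compl_singleton
    have a2 := a1.congr_of_eventuallyEq (f₁ := fun _ => κ) (Filter.eventually_of_mem
      (hU.mem_nhds ⟨hz, hz0⟩) fun w hw => (h1 w hw.1 hw.2).symm)
    have a3 := a2.unique (hasDerivAt_const z κ)
    exact (mul_eq_zero.1 a3).resolve_left (Complex.exp_ne_zero _)
  have h3 : deriv (fun z => l z - G z) 0 = 0 := by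
    have c1 : Filter.Tendsto (deriv fun z => l z - G z) (𝓝[≠] 0) (𝓝 (deriv (fun z => l z - G z) 0)) :=
      (hcd.continuousAt (isOpen_ball.mem_nhds hz)).tendsto.mono_left nhdsWithin_le_nhds
    have c2 : Filter.Tendsto (deriv fun z => l z - G z) (𝓝[≠] 0) (𝓝 0) := by
      refine tendsto_const_nhds.congr' ?_
      filter_upwards [nhdsWithin_le_nhds (isOpen_ball.mem_nhds hz), self_mem_nhdsWithin] with w h4 h5
      exact (h2 w h4 h5).symm
    exact tendsto_nhds_unique c1 c2
  intro z hz'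
  have := IsOpen.is_const_of_deriv_eq_zero (𝕜 := ℂ) isOpen_ball
    (convex_ball (0 : ℂ) 1).isPreconnected hd (fun x hx => by
      rcases eq_or_ne x 0 with rfl | hx0
      · exact h3
      · exact h2 x hx hx0) hz' hz
  linear_combination this

/-- The two coefficient inequalities up to `ε`, from `approx` applied to `f (ρ z) / M` with `ρ < 1`. -/
theorem bounds_eps {f G : ℂ → ℂ} (hf : DifferentiableOn ℂ f (ball 0 1))
    (hinj : Set.InjOn f (ball 0 1)) (h0 : f 0 = 0)
    (hG : DifferentiableOn ℂ G (ball 0 1)) (hG0 : G 0 = 0)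
    (hfG : ∀ z ∈ ball (0 : ℂ) 1, z ≠ 0 → cexp (G z) = f z / z)
    {r : ℝ} (hr0 : 0 ≤ r) (hr1 : r < 1) {ε : ℝ} (hε : 0 < ε) (hε1 : ε < 1) (N : ℕ) :
    ∃ q : ℝ, 1 - ε < q ∧ q < 1 ∧
      ∑ n ∈ Finset.range N, (n : ℝ) * ‖cf G n‖ ^ 2 * ((q * r) ^ 2) ^ n
        ≤ -4 * Real.log (1 - r ^ 2) + ε ∧
      ∑ n ∈ Finset.range (N + 1), (2 * (n : ℝ) - 1) * ‖cf (fun z => cexp (-G z / 2)) n‖ ^ 2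
        * ((q * r) ^ 2) ^ n ≤ ε := by
  obtain ⟨ρ, hρ⟩ : ∃ ρ : ℝ, ρ = 1 - ε / 2 := ⟨_, rfl⟩
  have hρ0 : 0 < ρ := by linarith
  have hρ1 : ρ < 1 := by linarith
  have hz : (0 : ℂ) ∈ ball (0 : ℂ) 1 := by simp
  have hsub : closedBall (0 : ℂ) ρ ⊆ ball 0 1 := closedBall_subset_ball hρ1
  obtain ⟨M', hM'⟩ := (isCompact_closedBall (0 : ℂ) ρ).exists_bound_of_continuousOn
    (hf.continuousOn.mono hsub)
  obtain ⟨M, hM⟩ : ∃ M : ℝ, M = |M'| + 1 := ⟨_, rfl⟩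
  have hM0 : 0 < M := by rw [hM]; positivity
  have hMC : (M : ℂ) ≠ 0 := by exact_mod_cast hM0.ne'
  have hρC : (ρ : ℂ) ≠ 0 := by exact_mod_cast hρ0.ne'
  have hρm : ∀ z ∈ ball (0 : ℂ) 1, (ρ : ℂ) * z ∈ closedBall (0 : ℂ) ρ := by
    intro z hz
    rw [mem_ball_zero_iff] at hz
    rw [mem_closedBall_zero_iff, norm_mul, Complex.norm_real, Real.norm_of_nonneg hρ0.le]
    nlinarith
  have gd : DifferentiableOn ℂ (fun z => f (ρ * z) / M) (ball 0 1) :=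
    (hf.comp (f := fun z => (ρ : ℂ) * z) (by fun_prop) fun z hz => hsub (hρm z hz)).div_const _
  have gi : Set.InjOn (fun z => f (ρ * z) / M) (ball 0 1) := by
    intro x hx y hy hxy
    have h1 := (div_left_inj' hMC).1 hxy
    exact mul_left_cancel₀ hρC (hinj (hsub (hρm x hx)) (hsub (hρm y hy)) h1)
  have gm : Set.MapsTo (fun z => f (ρ * z) / M) (ball 0 1) (ball 0 1) := by
    intro z hz
    have := hM' _ (hρm z hz)
    rw [mem_ball_zero_iff, norm_div, Complex.norm_real, Real.norm_of_nonneg hM0.le,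
      div_lt_one hM0, hM]
    linarith [le_abs_self M']
  obtain ⟨a, ha0, ha2, ha1, l, hl, hlre, -, hlF, hgood⟩ := approx hr0 hr1 gd gi gm (by simp [h0])
    (half_pos hε)
  obtain ⟨q, hq⟩ : ∃ q : ℝ, q = ρ * a := ⟨_, rfl⟩
  have hq0 : 0 < q := by rw [hq]; positivity
  have hq1 : q < 1 := by rw [hq]; nlinarith
  have hqn : ‖(q : ℂ)‖ ≤ 1 := by rw [Complex.norm_real, Real.norm_of_nonneg hq0.le]; exact hq1.le
  have hqm : ∀ z ∈ ball (0 : ℂ) 1, (q : ℂ) * z ∈ ball (0 : ℂ) 1 := by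
    intro z hz
    rw [mem_ball_zero_iff] at *
    rw [norm_mul]
    nlinarith [norm_nonneg z, norm_nonneg (q : ℂ)]
  have hGq : DifferentiableOn ℂ (fun z => G (q * z)) (ball 0 1) :=
    hG.comp (f := fun z => (q : ℂ) * z) (by fun_prop) hqm
  have hE : DifferentiableOn ℂ (fun z => cexp (-G z / 2)) (ball 0 1) := (hG.neg.div_const 2).cexp
  have hlG := log_unique hl hGq (κ := ρ / M) (by
    intro z hz hz0
    have h1 := hlF z hz
    simp only at h1
    have haC : (a : ℂ) ≠ 0 := by exact_mod_cast ha0.ne'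
    have hqz : (q : ℂ) * z ≠ 0 := mul_ne_zero (by exact_mod_cast hq0.ne') hz0
    rw [hfG _ (hqm z hz) hqz]
    have h2 : (ρ : ℂ) * (a * z) = q * z := by rw [hq]; push_cast; ring
    rw [h2] at h1
    have h3 : (q : ℂ) * z = ρ * a * z := by rw [hq]; push_cast; ring
    rw [div_eq_iff hMC] at h1
    rw [h1, h3]
    field_simp)
  obtain ⟨d, hd⟩ : ∃ d : ℂ, d = l 0 := ⟨_, rfl⟩
  have hlG' : ∀ z ∈ ball (0 : ℂ) 1, l z = 1 * G (q * z) + d := by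
    intro z hz
    rw [hlG z hz, mul_zero, hG0, hd]; ring
  have hdre : d.re ≤ 0 := by rw [hd]; exact hlre 0 hz
  have cfl : ∀ n : ℕ, (n : ℝ) * ‖cf l n‖ ^ 2 * (r ^ 2) ^ n =
      (n : ℝ) * ‖cf G n‖ ^ 2 * ((q * r) ^ 2) ^ n := by
    intro n
    rw [cf_congr (hGq.const_mul 1 |>.add_const d) hlG', cf_scale hG hqn]
    rcases eq_or_ne n 0 with rfl | hn
    · simp
    · simp only [if_neg hn]
      rw [one_mul, add_zero, norm_mul, norm_pow, Complex.norm_real, Real.norm_of_nonneg hq0.le]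
      ring
  have hEl : ∀ z ∈ ball (0 : ℂ) 1, cexp (-l z / 2) =
      cexp (-d / 2) * cexp (-G (q * z) / 2) + 0 := by
    intro z hz
    rw [hlG' z hz, add_zero, ← Complex.exp_add]
    congr 1; ring
  have hEq : DifferentiableOn ℂ (fun z => cexp (-G (q * z) / 2)) (ball 0 1) :=
    (hGq.neg.div_const 2).cexp
  obtain ⟨D, hD⟩ : ∃ D : ℝ, D = ‖cexp (-d / 2)‖ ^ 2 := ⟨_, rfl⟩
  have hD1 : 1 ≤ D := by
    rw [hD]
    apply one_le_pow₀
    rw [Complex.norm_exp]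
    apply Real.one_le_exp
    simp
    linarith
  have cfe : ∀ n : ℕ, (2 * (n : ℝ) - 1) * ‖cf (fun z => cexp (-l z / 2)) n‖ ^ 2 * (r ^ 2) ^ n =
      D * ((2 * (n : ℝ) - 1) * ‖cf (fun z => cexp (-G z / 2)) n‖ ^ 2 * ((q * r) ^ 2) ^ n) := by
    intro n
    rw [cf_congr (hEq.const_mul _ |>.add_const 0) hEl,
      cf_scale (f := fun z => cexp (-G z / 2)) hE hqn, hD]
    simp only [ite_self]
    rw [add_zero, norm_mul, norm_mul, norm_pow, Complex.norm_real, Real.norm_of_nonneg hq0.le]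
    ring
  obtain ⟨g1, g2⟩ := hgood r hr0 le_rfl
  refine ⟨q, by rw [hq]; nlinarith, hq1, ?_, ?_⟩
  · have s1 := Phi_hasSum hr0 hr1 hl
    have s2 : Summable fun n : ℕ => (n : ℝ) * ‖cf l n‖ ^ 2 * (r ^ 2) ^ n := s1.summable
    have s3 := s2.sum_le_tsum (Finset.range N) fun n _ => by positivity
    rw [Phi] at g1
    simp only [cfl] at s3 g1
    linarith
  · have s1 := Psi_hasSum (f := fun z => cexp (-l z / 2)) hr0 hr1 (hl.neg.div_const 2).cexp
    have s3 := sum_le_hasSum (Finset.range (N + 1)) (fun n hn => by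
      have hn1 : 1 ≤ n := by
        rw [Finset.mem_range] at hn; omega
      have : (0 : ℝ) ≤ 2 * n - 1 := by
        have : (1 : ℝ) ≤ n := by exact_mod_cast hn1
        linarith
      positivity) s1
    simp only [cfe] at s3
    rw [← Finset.mul_sum] at s3
    by_contra hc
    push Not at hc
    nlinarith

/-- The two coefficient inequalities for univalent functions: Milin-type for `G = log (f z / z)` and
area-type for `exp (-G / 2) = √(z / f z)`. -/
theorem bounds_S {f G : ℂ → ℂ} (hf : DifferentiableOn ℂ f (ball 0 1))
    (hinj : Set.InjOn f (ball 0 1)) (h0 : f 0 = 0)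
    (hG : DifferentiableOn ℂ G (ball 0 1)) (hG0 : G 0 = 0)
    (hfG : ∀ z ∈ ball (0 : ℂ) 1, z ≠ 0 → cexp (G z) = f z / z)
    {r : ℝ} (hr0 : 0 ≤ r) (hr1 : r < 1) (N : ℕ) :
    ∑ n ∈ Finset.range N, (n : ℝ) * ‖cf G n‖ ^ 2 * (r ^ 2) ^ n ≤ -4 * Real.log (1 - r ^ 2) ∧
      ∑ n ∈ Finset.range (N + 1), (2 * (n : ℝ) - 1) * ‖cf (fun z => cexp (-G z / 2)) n‖ ^ 2
        * (r ^ 2) ^ n ≤ 0 := by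
  have key : ∀ k : ℕ, ∃ q : ℝ, 1 - 1 / ((k : ℝ) + 2) < q ∧ q < 1 ∧ _ ∧ _ := fun k =>
    bounds_eps hf hinj h0 hG hG0 hfG hr0 hr1 (ε := 1 / ((k : ℝ) + 2)) (by positivity)
      (by rw [div_lt_one (by positivity)]; have : (0 : ℝ) ≤ k := by positivity
          linarith) N
  choose q hq1 hq2 hA hB using key
  have hε : Filter.Tendsto (fun k : ℕ => 1 / ((k : ℝ) + 2)) Filter.atTop (𝓝 0) := by
    have := tendsto_one_div_add_atTop_nhds_zero_nat (𝕜 := ℝ)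
    have := (Filter.tendsto_add_atTop_iff_nat 1).2 this
    refine this.congr fun k => ?_
    push_cast; ring
  have hq : Filter.Tendsto q Filter.atTop (𝓝 1) := by
    refine tendsto_of_tendsto_of_tendsto_of_le_of_le (g := fun k : ℕ => 1 - 1 / ((k : ℝ) + 2))
      (h := fun _ => 1) ?_ tendsto_const_nhds (fun k => (hq1 k).le) (fun k => (hq2 k).le)
    simpa using hε.const_sub 1
  constructor
  · have c : Continuous fun x : ℝ => ∑ n ∈ Finset.range N, (n : ℝ) * ‖cf G n‖ ^ 2 * ((x * r) ^ 2) ^ n := by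
      fun_prop
    have t1 := (c.tendsto 1).comp hq
    have t2 := hε.const_add (-4 * Real.log (1 - r ^ 2))
    have := le_of_tendsto_of_tendsto' t1 t2 hA
    simpa using this
  · have c : Continuous fun x : ℝ => ∑ n ∈ Finset.range (N + 1),
        (2 * (n : ℝ) - 1) * ‖cf (fun z => cexp (-G z / 2)) n‖ ^ 2 * ((x * r) ^ 2) ^ n := by
      fun_prop
    have t1 := (c.tendsto 1).comp hq
    have := le_of_tendsto_of_tendsto' t1 hε hB
    simpa using this

/-! ### Integration in `t` and the equality case -/

theorem lintegral_rpow_unit {p : ℝ} (hp : -1 < p) :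
    ∫⁻ t in Set.Ioo (0 : ℝ) 1, ENNReal.ofReal (t ^ p) = ENNReal.ofReal (1 / (p + 1)) := by
  have h1 : IntervalIntegrable (fun t : ℝ => t ^ p) MeasureTheory.volume 0 1 :=
    intervalIntegral.intervalIntegrable_rpow' hp
  have h2 : MeasureTheory.IntegrableOn (fun t : ℝ => t ^ p) (Set.Ioo 0 1) := by
    rw [intervalIntegrable_iff_integrableOn_Ioo_of_le zero_le_one] at h1
    exact h1
  rw [← MeasureTheory.ofReal_integral_eq_lintegral_ofReal h2]
  · rw [← MeasureTheory.integral_Ioc_eq_integral_Ioo, ← intervalIntegral.integral_of_le zero_le_one,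
      integral_rpow (Or.inl hp), Real.one_rpow, Real.zero_rpow (by linarith), sub_zero]
  · filter_upwards [MeasureTheory.ae_restrict_mem measurableSet_Ioo] with t ht
    exact Real.rpow_nonneg ht.1.le p

theorem lintegral_series {α : ℝ} (hα : -1 < α) {a : ℕ → ℝ} (ha : ∀ n, 0 ≤ a n) :
    ∫⁻ t in Set.Ioo (0 : ℝ) 1, ∑' n : ℕ, ENNReal.ofReal (a n * t ^ ((n : ℝ) + α)) =
      ∑' n : ℕ, ENNReal.ofReal (a n / ((n : ℝ) + 1 + α)) := by
  rw [MeasureTheory.lintegral_tsum (fun n => by fun_prop)]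
  congr 1
  funext n
  have hp : -1 < (n : ℝ) + α := by
    have : (0 : ℝ) ≤ n := by positivity
    linarith
  simp_rw [ENNReal.ofReal_mul (ha n)]
  rw [MeasureTheory.lintegral_const_mul _ (by fun_prop), lintegral_rpow_unit hp,
    ← ENNReal.ofReal_mul (ha n)]
  congr 1
  rw [mul_one_div]
  congr 1
  ring

/-- Integrating a comparison of power series against `t ^ (α - 1)`; equality forces equality of the
power series at almost every point. -/
theorem integrate_compare {α : ℝ} (hα : -1 < α) {a b : ℕ → ℝ} (ha : ∀ n, 0 ≤ a n)
    (hb : ∀ n, 0 ≤ b n)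
    (hsum : ∀ t ∈ Set.Ioo (0 : ℝ) 1, Summable fun n : ℕ => a n * t ^ (n + 1))
    (hsumb : ∀ t ∈ Set.Ioo (0 : ℝ) 1, Summable fun n : ℕ => b n * t ^ (n + 1))
    (hle : ∀ t ∈ Set.Ioo (0 : ℝ) 1, ∑' n : ℕ, a n * t ^ (n + 1) ≤ ∑' n : ℕ, b n * t ^ (n + 1))
    (hB : Summable fun n : ℕ => b n / ((n : ℝ) + 1 + α)) :
    ∑' n : ℕ, a n / ((n : ℝ) + 1 + α) ≤ ∑' n : ℕ, b n / ((n : ℝ) + 1 + α) ∧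
    (∑' n : ℕ, a n / ((n : ℝ) + 1 + α) = ∑' n : ℕ, b n / ((n : ℝ) + 1 + α) →
      ∀ᵐ t ∂(MeasureTheory.volume.restrict (Set.Ioo (0 : ℝ) 1)),
        ∑' n : ℕ, a n * t ^ (n + 1) = ∑' n : ℕ, b n * t ^ (n + 1)) := by
  have hden : ∀ n : ℕ, 0 < (n : ℝ) + 1 + α := fun n => by
    have : (0 : ℝ) ≤ n := by positivity
    linarith
  -- on `(0, 1)` the integrand is `t ^ (α - 1)` times the power series
  have conv : ∀ c : ℕ → ℝ, (∀ n, 0 ≤ c n) → ∀ t ∈ Set.Ioo (0 : ℝ) 1,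
      (Summable fun n : ℕ => c n * t ^ (n + 1)) →
      ∑' n : ℕ, ENNReal.ofReal (c n * t ^ ((n : ℝ) + α)) =
        ENNReal.ofReal (t ^ (α - 1) * ∑' n : ℕ, c n * t ^ (n + 1)) := by
    intro c hc t ht hs
    have e : ∀ n : ℕ, c n * t ^ ((n : ℝ) + α) = t ^ (α - 1) * (c n * t ^ (n + 1)) := by
      intro n
      rw [← Real.rpow_natCast t (n + 1), mul_left_comm, ← Real.rpow_add ht.1]
      congr 2
      push_cast; ring
    simp_rw [e]
    rw [← tsum_mul_left, ENNReal.ofReal_tsum_of_nonneg _ (hs.mul_left _)]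
    intro n
    have := ht.1.le
    have := hc n
    positivity
  have hae : ∀ᵐ t ∂(MeasureTheory.volume.restrict (Set.Ioo (0 : ℝ) 1)),
      ∑' n : ℕ, ENNReal.ofReal (a n * t ^ ((n : ℝ) + α)) ≤
        ∑' n : ℕ, ENNReal.ofReal (b n * t ^ ((n : ℝ) + α)) := by
    filter_upwards [MeasureTheory.ae_restrict_mem measurableSet_Ioo] with t ht
    rw [conv a ha t ht (hsum t ht), conv b hb t ht (hsumb t ht)]
    exact ENNReal.ofReal_le_ofReal (mul_le_mul_of_nonneg_left (hle t ht)
      (Real.rpow_nonneg ht.1.le _))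
  have h1 := MeasureTheory.lintegral_mono_ae hae
  rw [lintegral_series hα ha, lintegral_series hα hb] at h1
  have hAn : ∀ n : ℕ, 0 ≤ a n / ((n : ℝ) + 1 + α) := fun n => div_nonneg (ha n) (hden n).le
  have hBn : ∀ n : ℕ, 0 ≤ b n / ((n : ℝ) + 1 + α) := fun n => div_nonneg (hb n) (hden n).le
  have hBfin : ∑' n : ℕ, ENNReal.ofReal (b n / ((n : ℝ) + 1 + α)) ≠ ⊤ := by
    rw [← ENNReal.ofReal_tsum_of_nonneg hBn hB]; exact ENNReal.ofReal_ne_top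
  have hAfin : ∑' n : ℕ, ENNReal.ofReal (a n / ((n : ℝ) + 1 + α)) ≠ ⊤ :=
    ne_top_of_le_ne_top hBfin h1
  have hA : Summable fun n : ℕ => a n / ((n : ℝ) + 1 + α) := by
    have := ENNReal.summable_toReal hAfin
    refine this.congr fun n => ENNReal.toReal_ofReal (hAn n)
  constructor
  · rw [← ENNReal.ofReal_tsum_of_nonneg hAn hA, ← ENNReal.ofReal_tsum_of_nonneg hBn hB,
      ENNReal.ofReal_le_ofReal_iff (tsum_nonneg hBn)] at h1
    exact h1
  · intro heq
    have h2 := MeasureTheory.ae_eq_of_ae_le_of_lintegral_le hae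
      (by rw [lintegral_series hα ha]; exact hAfin)
      (AEMeasurable.tsum fun n => by fun_prop)
      (by rw [lintegral_series hα ha, lintegral_series hα hb,
            ← ENNReal.ofReal_tsum_of_nonneg hAn hA, ← ENNReal.ofReal_tsum_of_nonneg hBn hB, heq])
    filter_upwards [h2, MeasureTheory.ae_restrict_mem measurableSet_Ioo] with t ht1 ht
    rw [conv a ha t ht (hsum t ht), conv b hb t ht (hsumb t ht)] at ht1
    have hp := Real.rpow_pos_of_pos ht.1 (α - 1)
    have na : 0 ≤ ∑' n : ℕ, a n * t ^ (n + 1) := tsum_nonneg fun n => by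
      have := ht.1.le
      have := ha n
      positivity
    have nb : 0 ≤ ∑' n : ℕ, b n * t ^ (n + 1) := tsum_nonneg fun n => by
      have := ht.1.le
      have := hb n
      positivity
    rw [ENNReal.ofReal_eq_ofReal_iff (by positivity) (by positivity)] at ht1
    exact mul_left_cancel₀ hp.ne' ht1

/-- Two power series with nonnegative coefficients agreeing almost everywhere on `(0, 1)`: the
leading coefficient of the second is at most that of the first. -/
theorem leading_le {a b : ℕ → ℝ} (ha : ∀ n, 0 ≤ a n) (hb : ∀ n, 0 ≤ b n)
    (hsum : ∀ t ∈ Set.Ioo (0 : ℝ) 1, Summable fun n : ℕ => a n * t ^ (n + 1))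
    (hsumb : ∀ t ∈ Set.Ioo (0 : ℝ) 1, Summable fun n : ℕ => b n * t ^ (n + 1))
    (h : ∀ᵐ t ∂(MeasureTheory.volume.restrict (Set.Ioo (0 : ℝ) 1)),
        ∑' n : ℕ, a n * t ^ (n + 1) = ∑' n : ℕ, b n * t ^ (n + 1)) : b 0 ≤ a 0 := by
  obtain ⟨C, hC⟩ : ∃ C : ℝ, C = ∑' n : ℕ, a n * (1 / 2 : ℝ) ^ (n + 1) := ⟨_, rfl⟩
  have hs2 := hsum (1 / 2) ⟨by norm_num, by norm_num⟩
  have hC0 : 0 ≤ C := by rw [hC]; exact tsum_nonneg fun n => mul_nonneg (ha n) (by positivity)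
  have hbound : ∀ t : ℝ, 0 < t → t < 1 / 2 →
      ∑' n : ℕ, a n * t ^ (n + 1) = ∑' n : ℕ, b n * t ^ (n + 1) → b 0 ≤ a 0 + 4 * C * t := by
    intro t ht0 ht1 heq
    have hm : t ∈ Set.Ioo (0 : ℝ) 1 := ⟨ht0, by linarith⟩
    have h1 : b 0 * t ≤ ∑' n : ℕ, b n * t ^ (n + 1) := by
      have := (hsumb t hm).le_tsum 0 fun n _ => mul_nonneg (hb n) (by positivity)
      simpa using this
    rw [← heq, (hsum t hm).tsum_eq_zero_add] at h1
    have h2 : ∑' n : ℕ, a (n + 1) * t ^ (n + 1 + 1) ≤ 4 * t ^ 2 * C := by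
      have hs3 := (summable_nat_add_iff 1).2 hs2
      have h3 : ∑' n : ℕ, a (n + 1) * t ^ (n + 1 + 1) ≤
          ∑' n : ℕ, 4 * t ^ 2 * (a (n + 1) * (1 / 2 : ℝ) ^ (n + 1 + 1)) := by
        refine ((summable_nat_add_iff 1).2 (hsum t hm)).tsum_le_tsum (fun n => ?_)
          (hs3.mul_left _)
        have h4 : t ^ n ≤ (1 / 2 : ℝ) ^ n := pow_le_pow_left₀ ht0.le ht1.le n
        have h5 := mul_le_mul_of_nonneg_left h4 (mul_nonneg (ha (n + 1)) (sq_nonneg t))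
        rw [pow_add (1 / 2 : ℝ), pow_add (1 / 2 : ℝ), pow_add t, pow_add t]
        calc _ = a (n + 1) * t ^ 2 * t ^ n := by ring
          _ ≤ _ := h5
          _ = _ := by ring
      rw [tsum_mul_left] at h3
      refine h3.trans (mul_le_mul_of_nonneg_left ?_ (by positivity))
      rw [hC, hs2.tsum_eq_zero_add]
      have := ha 0
      have : 0 ≤ a 0 * (1 / 2 : ℝ) ^ (0 + 1) := by positivity
      linarith
    have h6 : b 0 * t ≤ (a 0 + 4 * C * t) * t := by
      simp only [zero_add, pow_one] at h1
      nlinarith only [h1, h2]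
    exact le_of_mul_le_mul_right h6 ht0
  by_contra hc
  push Not at hc
  obtain ⟨δ, hδ⟩ : ∃ δ : ℝ, δ = min (1 / 2) ((b 0 - a 0) / (4 * C + 1)) := ⟨_, rfl⟩
  have hδ0 : 0 < δ := by
    rw [hδ]
    exact lt_min (by norm_num) (div_pos (by linarith) (by positivity))
  have hδ1 : δ ≤ 1 / 2 := by rw [hδ]; exact min_le_left _ _
  have hδ2 : δ ≤ (b 0 - a 0) / (4 * C + 1) := by rw [hδ]; exact min_le_right _ _
  have hsub : Set.Ioo 0 δ ⊆ Set.Ioo (0 : ℝ) 1 := Set.Ioo_subset_Ioo_right (by linarith)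
  have h' : ∀ᵐ t ∂(MeasureTheory.volume.restrict (Set.Ioo (0 : ℝ) δ)),
      ∑' n : ℕ, a n * t ^ (n + 1) = ∑' n : ℕ, b n * t ^ (n + 1) := MeasureTheory.ae_mono (MeasureTheory.Measure.restrict_mono_set
    MeasureTheory.volume hsub) h
  have hne : (MeasureTheory.volume.restrict (Set.Ioo 0 δ)) ≠ 0 := by
    rw [Ne, MeasureTheory.Measure.restrict_eq_zero, Real.volume_Ioo, ENNReal.ofReal_eq_zero]
    linarith
  have : (MeasureTheory.ae (MeasureTheory.volume.restrict (Set.Ioo 0 δ))).NeBot :=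
    MeasureTheory.ae_neBot.2 hne
  obtain ⟨t, ht, htm⟩ := (h'.and (MeasureTheory.ae_restrict_mem measurableSet_Ioo)).exists
  have h7 := hbound t htm.1 (by linarith [htm.2]) ht
  rw [le_div_iff₀ (by positivity)] at hδ2
  nlinarith [htm.1, htm.2]

/-- The equality case: `|γ₁| ≥ 1` and the coefficient inequality for `exp (-G / 2)` leave no room for
coefficients beyond the first. -/
theorem koebe_of_extremal {f G : ℂ → ℂ} (hf : DifferentiableOn ℂ f (ball 0 1))
    (hinj : Set.InjOn f (ball 0 1)) (h0 : f 0 = 0)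
    (hG : DifferentiableOn ℂ G (ball 0 1)) (hG0 : G 0 = 0)
    (hfG : ∀ z ∈ ball (0 : ℂ) 1, z ≠ 0 → cexp (G z) = f z / z)
    {c : ℂ} (hc : cf G 1 = 2 * c) (hc1 : 1 ≤ ‖c‖) :
    ∃ θ : ℝ, Set.EqOn f (fun z => z / (1 - cexp (θ * I) * z) ^ 2) (ball (0 : ℂ) 1) := by
  have hz : (0 : ℂ) ∈ ball (0 : ℂ) 1 := by simp
  obtain ⟨E, hEdef⟩ : ∃ E : ℂ → ℂ, E = fun z => cexp (-G z / 2) := ⟨_, rfl⟩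
  have hE : DifferentiableOn ℂ E (ball 0 1) := by rw [hEdef]; exact (hG.neg.div_const 2).cexp
  have hb0 : cf E 0 = 1 := by rw [cf_zero, hEdef]; simp [hG0]
  have hb1 : cf E 1 = -c := by
    have h1 := (hG.differentiableAt (isOpen_ball.mem_nhds hz)).hasDerivAt
    have h2 := (h1.fun_neg.div_const 2).cexp
    have h3 : deriv G 0 = 2 * c := by rw [← hc, cf, iteratedDeriv_one]; simp
    rw [cf, iteratedDeriv_one, hEdef, h2.deriv, h3, hG0]
    simp
    ring
  have key : ∀ N : ℕ, ∑ n ∈ Finset.range (N + 1), (2 * (n : ℝ) - 1) * ‖cf E n‖ ^ 2 ≤ 0 := by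
    intro N
    have cont : Continuous fun r : ℝ => ∑ n ∈ Finset.range (N + 1),
        (2 * (n : ℝ) - 1) * ‖cf E n‖ ^ 2 * (r ^ 2) ^ n := by fun_prop
    have t1 : Filter.Tendsto (fun r : ℝ => ∑ n ∈ Finset.range (N + 1),
        (2 * (n : ℝ) - 1) * ‖cf E n‖ ^ 2 * (r ^ 2) ^ n) (𝓝[<] 1) _ :=
      (cont.tendsto 1).mono_left nhdsWithin_le_nhds
    have t2 := le_of_tendsto t1 (b := 0) (by
      have e1 : ∀ᶠ r : ℝ in 𝓝[<] 1, 0 < r := nhdsWithin_le_nhds (lt_mem_nhds one_pos)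
      filter_upwards [e1, self_mem_nhdsWithin] with r hr hr1
      have := (bounds_S hf hinj h0 hG hG0 hfG hr.le hr1 N).2
      rwa [← hEdef] at this)
    simpa using t2
  have hn1 : ‖c‖ = 1 := by
    have := key 1
    rw [Finset.sum_range_succ, Finset.sum_range_one, hb0, hb1, norm_neg] at this
    norm_num at this
    nlinarith
  have hbn : ∀ n : ℕ, 2 ≤ n → cf E n = 0 := by
    intro n hn
    obtain ⟨m, rfl⟩ := Nat.exists_eq_add_of_le' hn
    have h1 := key (m + 2)
    rw [Finset.sum_range_succ, Finset.sum_range_succ', Finset.sum_range_succ', zero_add, hb0, hb1,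
      norm_neg, hn1] at h1
    have h2 : 0 ≤ ∑ k ∈ Finset.range m, (2 * ((k + 1 + 1 : ℕ) : ℝ) - 1) * ‖cf E (k + 1 + 1)‖ ^ 2 := by
      refine Finset.sum_nonneg fun k _ => mul_nonneg ?_ (sq_nonneg _)
      push_cast
      have : (0 : ℝ) ≤ k := by positivity
      linarith
    have h3 : (0 : ℝ) ≤ m := by positivity
    norm_num at h1 h2
    have h4 : ‖cf E (m + 2)‖ ^ 2 ≤ 0 := by nlinarith [sq_nonneg ‖cf E (m + 2)‖]
    exact norm_eq_zero.1 (pow_eq_zero_iff two_ne_zero |>.1 (le_antisymm h4 (sq_nonneg _)))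
  have hEz : ∀ z ∈ ball (0 : ℂ) 1, E z = 1 - c * z := by
    intro z hz
    have h1 := cf_hasSum hE hz
    have h2 := hasSum_sum_of_ne_finset_zero (L := .unconditional ℕ)
      (f := fun n => cf E n * z ^ n) (s := Finset.range 2)
      (fun n hn => by
        rw [Finset.mem_range, not_lt] at hn
        simp only [hbn n hn, zero_mul])
    rw [h1.unique h2, Finset.sum_range_succ, Finset.sum_range_one, hb0, hb1]
    ring
  refine ⟨c.arg, fun z hz => ?_⟩
  have hcarg : cexp (c.arg * I) = c := by
    have := Complex.norm_mul_exp_arg_mul_I c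
    rwa [hn1, Complex.ofReal_one, one_mul] at this
  rcases eq_or_ne z 0 with rfl | hz0
  · simp [h0]
  · have h1 := hfG z hz hz0
    have h2 := hEz z hz
    simp only [hcarg]
    rw [← h2, hEdef, ← Complex.exp_nat_mul]
    have h3 : ((2 : ℕ) : ℂ) * (-G z / 2) = -G z := by push_cast; ring
    rw [h3, Complex.exp_neg, h1]
    field_simp

theorem logcoeff_n_over_n_add_alpha
    (α : ℝ) (hα : α > -1) (f : ℂ → ℂ) (γ : ℕ → ℂ) (hf : InClassS f) (hγ : IsLogCoeffs f γ) :
    (∑' n : ℕ, (((n : ℝ) + 1) / (((n : ℝ) + 1) + α)) * ‖γ (n + 1)‖ ^ 2 ≤ ∑' n : ℕ, 1 / (((n : ℝ) + 1) * (((n : ℝ) + 1) + α))) ∧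
    (∑' n : ℕ, (((n : ℝ) + 1) / (((n : ℝ) + 1) + α)) * ‖γ (n + 1)‖ ^ 2 = ∑' n : ℕ, 1 / (((n : ℝ) + 1) * (((n : ℝ) + 1) + α)) → IsKoebeRotation f) := by
  obtain ⟨hfa, hinj, h0, -⟩ := hf
  obtain ⟨G, hGa, hG0, hfG, hGγ⟩ := hγ
  have hfd : DifferentiableOn ℂ f (ball 0 1) := hfa.differentiableOn
  have hG : DifferentiableOn ℂ G (ball 0 1) := hGa.differentiableOn
  have hcf : ∀ n : ℕ, cf G (n + 1) = 2 * γ (n + 1) := by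
    intro n
    rw [cf, hGγ (n + 1) (by omega), mul_div_cancel_left₀]
    exact_mod_cast Nat.factorial_ne_zero _
  obtain ⟨a, ha⟩ : ∃ a : ℕ → ℝ, a = fun n : ℕ => ((n : ℝ) + 1) * ‖γ (n + 1)‖ ^ 2 := ⟨_, rfl⟩
  obtain ⟨b, hb⟩ : ∃ b : ℕ → ℝ, b = fun n : ℕ => 1 / ((n : ℝ) + 1) := ⟨_, rfl⟩
  have ha0 : ∀ n, 0 ≤ a n := fun n => by rw [ha]; positivity
  have hb0 : ∀ n, 0 ≤ b n := fun n => by rw [hb]; positivity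
  have hden : ∀ n : ℕ, 0 < (n : ℝ) + 1 + α := fun n => by
    have : (0 : ℝ) ≤ n := by positivity
    linarith
  have hLog : ∀ t ∈ Set.Ioo (0 : ℝ) 1, HasSum (fun n : ℕ => b n * t ^ (n + 1)) (-Real.log (1 - t)) := by
    intro t ht
    have := Real.hasSum_pow_div_log_of_abs_lt_one (x := t) (by rw [abs_of_pos ht.1]; exact ht.2)
    convert! this using 2 with n
    rw [hb]; ring
  have hpart : ∀ t ∈ Set.Ioo (0 : ℝ) 1, ∀ N : ℕ,
      ∑ n ∈ Finset.range N, a n * t ^ (n + 1) ≤ -Real.log (1 - t) := by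
    intro t ht N
    have h1 := (bounds_S hfd hinj h0 hG hG0 hfG (Real.sqrt_nonneg t)
      (by rw [Real.sqrt_lt' one_pos]; simpa using ht.2) (N + 1)).1
    rw [Real.sq_sqrt ht.1.le, Finset.sum_range_succ'] at h1
    have h2 : ∀ n : ℕ, ((n + 1 : ℕ) : ℝ) * ‖cf G (n + 1)‖ ^ 2 * t ^ (n + 1) =
        4 * (a n * t ^ (n + 1)) := by
      intro n
      rw [hcf, norm_mul, ha]
      push_cast
      norm_num
      ring
    simp only [h2] at h1
    rw [← Finset.mul_sum] at h1
    simp only [Nat.cast_zero, zero_mul, add_zero] at h1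
    linarith
  have hsum : ∀ t ∈ Set.Ioo (0 : ℝ) 1, Summable fun n : ℕ => a n * t ^ (n + 1) := fun t ht =>
    summable_of_sum_range_le (fun n => mul_nonneg (ha0 n) (pow_nonneg ht.1.le _)) (hpart t ht)
  have hle : ∀ t ∈ Set.Ioo (0 : ℝ) 1,
      ∑' n : ℕ, a n * t ^ (n + 1) ≤ ∑' n : ℕ, b n * t ^ (n + 1) := by
    intro t ht
    rw [(hLog t ht).tsum_eq]
    exact Real.tsum_le_of_sum_range_le (fun n => mul_nonneg (ha0 n) (pow_nonneg ht.1.le _)) (hpart t ht)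
  have hB : Summable fun n : ℕ => b n / ((n : ℝ) + 1 + α) := by
    -- compare with `1 / n²`: `n + 1 + α ≥ min 1 (1 + α) * (n + 1)`
    have h1 : Summable fun n : ℕ => 1 / ((n : ℝ) + 1) ^ 2 := by
      have := (summable_nat_add_iff 1).2 (Real.summable_one_div_nat_pow.2 one_lt_two)
      simpa using this
    have hm : 0 < min 1 (1 + α) := lt_min one_pos (by linarith)
    refine Summable.of_nonneg_of_le (fun n => div_nonneg (hb0 n) (hden n).le) (fun n => ?_)
      (h1.mul_left (1 / min 1 (1 + α)))
    rw [hb, div_div, div_mul_div_comm, one_mul]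
    have hn : (0 : ℝ) ≤ n := by positivity
    apply div_le_div_of_nonneg_left zero_le_one (by positivity)
    have h2 : min 1 (1 + α) * ((n : ℝ) + 1) ≤ (n : ℝ) + 1 + α := by
      have m1 := min_le_left 1 (1 + α)
      have m2 := min_le_right 1 (1 + α)
      nlinarith
    nlinarith
  have eA : ∀ n : ℕ, (((n : ℝ) + 1) / (((n : ℝ) + 1) + α)) * ‖γ (n + 1)‖ ^ 2 =
      a n / ((n : ℝ) + 1 + α) := fun n => by rw [ha]; ring
  have eB : ∀ n : ℕ, 1 / (((n : ℝ) + 1) * (((n : ℝ) + 1) + α)) = b n / ((n : ℝ) + 1 + α) :=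
    fun n => by rw [hb, div_div]
  simp only [eA, eB]
  obtain ⟨main, heq⟩ := integrate_compare hα ha0 hb0 hsum (fun t ht => (hLog t ht).summable) hle hB
  refine ⟨main, fun h => ?_⟩
  have h1 := leading_le ha0 hb0 hsum (fun t ht => (hLog t ht).summable) (heq h)
  rw [ha, hb] at h1
  norm_num at h1
  exact koebe_of_extremal hfd hinj h0 hG hG0 hfG (by simpa using hcf 0) h1
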